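/- Let n ≥ 2, 2 ≤ p ≤ ∞, let γ : I → ℝⁿ be a smooth, injective, regular, non-degenerate curve on a compact interval I, and let χ ∈ C_c^∞(ℝ) be nonnegative, not identically zero, and supported in the interior of I. Then there exists c > 0 (depending on p, γ, χ) such that for every λ ≥ 1 there exists a nonzero Schwartz function f on ℝⁿ belonging to Z_λ with ‖A_γ f‖_{L^p(ℝⁿ)} ≥ c λ^{−(1/n)(1/2 + 1/p)} ‖f‖_{L^p(ℝⁿ)}. -/

import Mathlib

open MeasureTheory Set
open scoped FourierTransform RealInnerProductSpace ENNReal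

noncomputable section

/-- Euclidean space ℝⁿ. -/
abbrev Euc (n : ℕ) := EuclideanSpace ℝ (Fin n)

/-- The averaging operator `A_γ f (x) = ∫ f(x - γ(s)) χ(s) ds`. -/
def avgOp {n : ℕ} (γ : ℝ → Euc n) (χ : ℝ → ℝ) (f : Euc n → ℂ) : Euc n → ℂ :=
  fun x => ∫ s : ℝ, f (x - γ s) * (χ s : ℂ)

/-- The `L^p` Sobolev norm `‖𝓕⁻¹[(1+|ξ|²)^{α/2} 𝓕 g]‖_{L^p}` of order `α`. -/
def sobolevNorm {n : ℕ} (p : ℝ≥0∞) (α : ℝ) (g : Euc n → ℂ) : ℝ≥0∞ :=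
  eLpNorm (𝓕⁻ (fun ξ : Euc n => (((1 + ‖ξ‖ ^ 2) ^ (α / 2) : ℝ) : ℂ) * 𝓕 g ξ)) p volume

/-- Non-degeneracy: `|det(γ'(s), …, γ⁽ⁿ⁾(s))| ≥ c₀ > 0` on `I`. -/
def NonDeg {n : ℕ} (γ : ℝ → Euc n) (I : Set ℝ) : Prop :=
  ∃ c₀ > (0 : ℝ), ∀ s ∈ I,
    c₀ ≤ |(Matrix.of fun i j : Fin n => iteratedDeriv ((j : ℕ) + 1) γ s i).det|

open scoped Convolution SchwartzMap Topology

/-! At `N ≈ λ^{1/n}` equispaced points `γ(s_k)` choose a unit vector `e_k` orthogonal to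
`γ'(s_k), …, γ⁽ⁿ⁻¹⁾(s_k)`. With `L = λ^{1/n}`, Taylor's formula bounds the phase
`⟨λ e_k, γ(s) - γ(s_k)⟩` by `O((L |s - s_k|)ⁿ)`, so a wave packet of frequency `λ e_k` and width
`1/ρ`, `ρ ≈ L`, centred at `-γ(s_k)`, does not oscillate along the part of the curve that it meets,
and its average is `≳ 1/ρ` on a ball of radius `≈ 1/ρ` around the origin. All `N` averages are
large on this common ball, whereas the packets themselves are essentially disjoint. The
parallelogram law provides unit coefficients for which the sum of the averages has `L²` norm on the
ball at least `√N` times that of a single one, and Hölder's inequality passes to `L^p`.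

For `λ` in a bounded range a single broad wave packet suffices: `t ↦ ∫ e^{itX} χ` is analytic and
nonzero at `t = 0`, hence nonzero for frequencies arbitrarily close to any given one, and
compactness makes the constant uniform. -/

theorem exists_pos_forall_mem_of_isCompact {X : Type*} [TopologicalSpace X] {K : Set X}
    (hK : IsCompact K) {P : X → ℝ → Prop} (hmono : ∀ x c d, c ≤ d → P x d → P x c)
    (hloc : ∀ x ∈ K, ∃ c > 0, ∀ᶠ y in 𝓝[K] x, P y c) :
    ∃ c > 0, ∀ x ∈ K, P x c := by
  refine hK.induction_on (p := fun S ↦ ∃ c > 0, ∀ x ∈ S, P x c) ⟨1, one_pos, by simp⟩ ?_ ?_ ?_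
  · rintro S T hST ⟨c, hc, hT⟩
    exact ⟨c, hc, fun x hx ↦ hT x (hST hx)⟩
  · rintro S T ⟨c, hc, hS⟩ ⟨d, hd, hT⟩
    refine ⟨min c d, lt_min hc hd, ?_⟩
    rintro x (hx | hx)
    · exact hmono x _ _ (min_le_left c d) (hS x hx)
    · exact hmono x _ _ (min_le_right c d) (hT x hx)
  · intro x hx
    obtain ⟨c, hc, hev⟩ := hloc x hx
    exact ⟨_, hev, c, hc, fun _ hy ↦ hy⟩

section Curve

variable {F : Type*} [NormedAddCommGroup F]

theorem eventually_mul_abs_sub_le_norm_sub_of_ne {γ : ℝ → F} (hγ : Continuous γ) {s t : ℝ}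
    (hst : s ≠ t) (hne : γ s ≠ γ t) :
    ∃ c > 0, ∀ᶠ q : ℝ × ℝ in 𝓝 (s, t), c * |q.1 - q.2| ≤ ‖γ q.1 - γ q.2‖ := by
  have : 0 < |s - t| := abs_pos.mpr (sub_ne_zero.mpr hst)
  have himage : 0 < ‖γ s - γ t‖ := norm_pos_iff.mpr (sub_ne_zero.mpr hne)
  refine ⟨‖γ s - γ t‖ / (2 * |s - t|), by positivity, ?_⟩
  refine ((ContinuousAt.eventually_lt (f := fun q : ℝ × ℝ ↦ _ * |q.1 - q.2|)
    (g := fun q : ℝ × ℝ ↦ ‖γ q.1 - γ q.2‖) (by fun_prop) (by fun_prop) ?_)).mono fun _ h ↦ h.le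
  calc ‖γ s - γ t‖ / (2 * |s - t|) * |s - t| = ‖γ s - γ t‖ / 2 := by field_simp
    _ < ‖γ s - γ t‖ := half_lt_self himage

variable [NormedSpace ℝ F]

theorem eventually_mul_abs_sub_le_norm_sub_of_hasStrictDerivAt {γ : ℝ → F} {γ' : F} {s : ℝ}
    (hγ : HasStrictDerivAt γ γ' s) (hne : γ' ≠ 0) :
    ∃ c > 0, ∀ᶠ q : ℝ × ℝ in 𝓝 (s, s), c * |q.1 - q.2| ≤ ‖γ q.1 - γ q.2‖ := by
  have hpos : 0 < ‖γ'‖ := norm_pos_iff.mpr hne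
  refine ⟨‖γ'‖ / 2, half_pos hpos, ?_⟩
  filter_upwards [(hasStrictDerivAt_iff_hasStrictFDerivAt.mp hγ).isLittleO.def (half_pos hpos)]
    with q hq
  rw [ContinuousLinearMap.toSpanSingleton_apply, Real.norm_eq_abs] at hq
  have htri := norm_sub_norm_le ((q.1 - q.2) • γ') (γ q.1 - γ q.2)
  rw [norm_sub_rev ((q.1 - q.2) • γ'), norm_smul, Real.norm_eq_abs] at htri
  linarith

theorem exists_mul_abs_sub_le_norm_sub {γ : ℝ → F} (hγ : ContDiff ℝ 1 γ) {K : Set ℝ}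
    (hK : IsCompact K) (hinj : InjOn γ K) (hreg : ∀ s ∈ K, deriv γ s ≠ 0) :
    ∃ c > 0, ∀ s ∈ K, ∀ t ∈ K, c * |s - t| ≤ ‖γ s - γ t‖ := by
  have hloc : ∀ q ∈ K ×ˢ K, ∃ c > 0, ∀ᶠ q' in 𝓝[K ×ˢ K] q,
      c * |q'.1 - q'.2| ≤ ‖γ q'.1 - γ q'.2‖ := by
    rintro ⟨s, t⟩ ⟨hs, ht⟩
    obtain ⟨c, hc, hev⟩ : ∃ c > 0, ∀ᶠ q : ℝ × ℝ in 𝓝 (s, t),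
        c * |q.1 - q.2| ≤ ‖γ q.1 - γ q.2‖ := by
      rcases eq_or_ne s t with rfl | hst
      · exact eventually_mul_abs_sub_le_norm_sub_of_hasStrictDerivAt
          (hγ.contDiffAt.hasStrictDerivAt one_ne_zero) (hreg s hs)
      · exact eventually_mul_abs_sub_le_norm_sub_of_ne hγ.continuous hst (hinj.ne hs ht hst)
    exact ⟨c, hc, hev.filter_mono nhdsWithin_le_nhds⟩
  obtain ⟨c, hc, hbound⟩ := exists_pos_forall_mem_of_isCompact (hK.prod hK)
    (P := fun q c ↦ c * |q.1 - q.2| ≤ ‖γ q.1 - γ q.2‖)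
    (fun q c d hcd hd ↦ le_trans (by gcongr) hd) hloc
  exact ⟨c, hc, fun s hs t ht ↦ hbound (s, t) ⟨hs, ht⟩⟩

theorem norm_sub_le_mul_abs_pow_of_norm_deriv_le {S : Set ℝ} (hS : S.OrdConnected) {s₀ s M : ℝ}
    (hs₀ : s₀ ∈ S) (hs : s ∈ S) (hM : 0 ≤ M) {m : ℕ} {g : ℝ → F} (hg : Differentiable ℝ g)
    (hderiv : ∀ t ∈ S, ‖deriv g t‖ ≤ M * |t - s₀| ^ m) :
    ‖g s - g s₀‖ ≤ M * |s - s₀| ^ (m + 1) := by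
  have hbound : ∀ t ∈ uIcc s₀ s, ‖deriv g t‖ ≤ M * |s - s₀| ^ m := fun t ht ↦
    (hderiv t (hS.uIcc_subset hs₀ hs ht)).trans <| by
      have := abs_sub_left_of_mem_uIcc ht
      gcongr
  have hmvt := (convex_uIcc s₀ s).norm_image_sub_le_of_norm_deriv_le (𝕜 := ℝ)
    (fun t _ ↦ hg t) hbound left_mem_uIcc right_mem_uIcc
  rwa [Real.norm_eq_abs, mul_assoc, ← pow_succ] at hmvt

theorem norm_sub_le_mul_abs_pow_of_iteratedDeriv_eq_zero {S : Set ℝ} (hS : S.OrdConnected)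
    {s₀ : ℝ} (hs₀ : s₀ ∈ S) {M : ℝ} {m : ℕ} {g : ℝ → F} (hg : ContDiff ℝ (m + 1 : ℕ) g)
    (hzero : ∀ j < m, iteratedDeriv (j + 1) g s₀ = 0)
    (hM : ∀ s ∈ S, ‖iteratedDeriv (m + 1) g s‖ ≤ M) :
    ∀ s ∈ S, ‖g s - g s₀‖ ≤ M * |s - s₀| ^ (m + 1) := by
  have hM₀ : 0 ≤ M := (norm_nonneg _).trans (hM s₀ hs₀)
  induction m generalizing g with
  | zero =>
    exact fun s hs ↦ norm_sub_le_mul_abs_pow_of_norm_deriv_le hS hs₀ hs hM₀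
      (hg.differentiable (by simp)) (by simpa [iteratedDeriv_one] using hM)
  | succ m ih =>
    intro s hs
    have hg' : ContDiff ℝ (m + 1 : ℕ) (deriv g) := (contDiff_succ_iff_deriv.mp hg).2.2
    have hzero' : deriv g s₀ = 0 := by simpa [iteratedDeriv_one] using hzero 0 m.succ_pos
    refine norm_sub_le_mul_abs_pow_of_norm_deriv_le hS hs₀ hs hM₀
      (hg.differentiable (by simp)) fun t ht ↦ ?_
    simpa [hzero'] using ih hg'
      (fun j hj ↦ by simpa [iteratedDeriv_succ'] using hzero (j + 1) (by omega))
      (fun t ht ↦ by simpa [iteratedDeriv_succ'] using hM t ht) t ht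

end Curve

section Normal

variable {E : Type*} [NormedAddCommGroup E] [InnerProductSpace ℝ E]

theorem exists_norm_eq_one_forall_inner_eq_zero [FiniteDimensional ℝ E] {ι : Type*} [Fintype ι]
    (w : ι → E) (hι : Fintype.card ι < Module.finrank ℝ E) :
    ∃ e : E, ‖e‖ = 1 ∧ ∀ i, ⟪e, w i⟫ = 0 := by
  set V := Submodule.span ℝ (range w)
  have hV : Module.finrank ℝ V ≤ Fintype.card ι := finrank_range_le_card w
  have hne : Vᗮ ≠ ⊥ := fun h ↦ by
    have := V.finrank_add_finrank_orthogonal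
    rw [h, finrank_bot] at this
    omega
  obtain ⟨x, hx, hx0⟩ := Submodule.exists_mem_ne_zero_of_ne_bot hne
  refine ⟨‖x‖⁻¹ • x, norm_smul_inv_norm hx0, fun i ↦ ?_⟩
  rw [inner_smul_left, (V.mem_orthogonal' x).mp hx _ (Submodule.subset_span ⟨i, rfl⟩), mul_zero]

theorem iteratedDeriv_inner_right {γ : ℝ → E} {j : ℕ} (hγ : ContDiff ℝ j γ) (e : E) (s : ℝ) :
    iteratedDeriv j (fun t ↦ ⟪e, γ t⟫) s = ⟪e, iteratedDeriv j γ s⟫ := by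
  simp only [iteratedDeriv_eq_iteratedFDeriv]
  exact congrArg (fun φ ↦ φ fun _ ↦ (1 : ℝ))
    ((innerSL ℝ e).iteratedFDeriv_comp_left hγ.contDiffAt le_rfl)

theorem exists_norm_eq_one_abs_inner_sub_le [FiniteDimensional ℝ E] {γ : ℝ → E} {n : ℕ}
    (hn : n ≠ 0) (hnE : n ≤ Module.finrank ℝ E) (hγ : ContDiff ℝ n γ) (a b : ℝ) :
    ∃ M ≥ 0, ∀ s₀ ∈ Icc a b, ∃ e : E, ‖e‖ = 1 ∧
      ∀ s ∈ Icc a b, |⟪e, γ s - γ s₀⟫| ≤ M * |s - s₀| ^ n := by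
  obtain ⟨m, rfl⟩ := Nat.exists_eq_succ_of_ne_zero hn
  obtain ⟨M, hM⟩ := (isCompact_Icc (a := a) (b := b)).exists_bound_of_continuousOn
    (hγ.continuous_iteratedDeriv _ le_rfl).continuousOn
  refine ⟨max M 0, le_max_right _ _, fun s₀ hs₀ ↦ ?_⟩
  obtain ⟨e, he, horth⟩ := exists_norm_eq_one_forall_inner_eq_zero
    (fun j : Fin m ↦ iteratedDeriv (j + 1) γ s₀) (by rw [Fintype.card_fin]; omega)
  refine ⟨e, he, fun s hs ↦ ?_⟩
  rw [inner_sub_right, ← Real.norm_eq_abs]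
  refine norm_sub_le_mul_abs_pow_of_iteratedDeriv_eq_zero ordConnected_Icc hs₀
    (contDiff_const.inner ℝ hγ) (fun j hj ↦ ?_) (fun t ht ↦ ?_) s hs
  · rw [iteratedDeriv_inner_right (hγ.of_le (by exact_mod_cast Nat.succ_le_succ hj.le))]
    exact horth ⟨j, hj⟩
  · rw [iteratedDeriv_inner_right hγ]
    calc ‖⟪e, iteratedDeriv (m + 1) γ t⟫‖ ≤ ‖e‖ * ‖iteratedDeriv (m + 1) γ t‖ :=
          norm_inner_le_norm _ _
      _ ≤ max M 0 := by rw [he, one_mul]; exact (hM t ht).trans (le_max_left _ _)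

end Normal

section UnitCoefficients

variable {𝕜 V : Type*} [RCLike 𝕜] [NormedAddCommGroup V] [InnerProductSpace 𝕜 V]
  {α : Type*} [MeasurableSpace α] {μ : Measure α}

theorem exists_norm_eq_one_norm_add_smul_sq_ge (u v : V) :
    ∃ ε : 𝕜, ‖ε‖ = 1 ∧ ‖u‖ ^ 2 + ‖v‖ ^ 2 ≤ ‖u + ε • v‖ ^ 2 := by
  have hpar := parallelogram_law_with_norm 𝕜 u v
  rcases le_total ‖u - v‖ ‖u + v‖ with h | h
  · exact ⟨1, norm_one, by rw [one_smul]; nlinarith [norm_nonneg (u - v)]⟩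
  · refine ⟨-1, by simp, ?_⟩
    rw [neg_smul, one_smul, ← sub_eq_add_neg]
    nlinarith [norm_nonneg (u + v)]

variable (𝕜) in
theorem exists_norm_eq_one_eLpNorm_add_smul_sq_ge {u v : α → V} (hu : MemLp u 2 μ)
    (hv : MemLp v 2 μ) :
    ∃ ε : 𝕜, ‖ε‖ = 1 ∧
      eLpNorm u 2 μ ^ 2 + eLpNorm v 2 μ ^ 2 ≤ eLpNorm (u + ε • v) 2 μ ^ 2 := by
  obtain ⟨ε, hε, hle⟩ := exists_norm_eq_one_norm_add_smul_sq_ge (𝕜 := 𝕜) (hu.toLp u) (hv.toLp v)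
  refine ⟨ε, hε, ?_⟩
  rw [← MemLp.toLp_const_smul, ← MemLp.toLp_add] at hle
  rw [← Lp.enorm_toLp hu, ← Lp.enorm_toLp hv, ← Lp.enorm_toLp (hu.add (hv.const_smul ε))]
  simp only [← ofReal_norm, ← ENNReal.ofReal_pow (norm_nonneg _)]
  rw [← ENNReal.ofReal_add (by positivity) (by positivity)]
  exact ENNReal.ofReal_le_ofReal hle

variable (𝕜) in
theorem exists_norm_eq_one_sum_eLpNorm_sq_le {ι : Type*} {h : ι → α → V}
    (hmem : ∀ i, MemLp (h i) 2 μ) (t : Finset ι) :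
    ∃ ε : ι → 𝕜, (∀ i, ‖ε i‖ = 1) ∧
      ∑ i ∈ t, eLpNorm (h i) 2 μ ^ 2 ≤ eLpNorm (∑ i ∈ t, ε i • h i) 2 μ ^ 2 := by
  classical
  induction t using Finset.induction_on with
  | empty => exact ⟨fun _ ↦ 1, by simp, by simp⟩
  | insert j t hj ih =>
    obtain ⟨ε, hε, hsum⟩ := ih
    obtain ⟨δ, hδ, hadd⟩ := exists_norm_eq_one_eLpNorm_add_smul_sq_ge 𝕜
      (u := ∑ i ∈ t, ε i • h i) (memLp_finsetSum' t fun i _ ↦ (hmem i).const_smul (ε i)) (hmem j)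
    refine ⟨Function.update ε j δ, fun i ↦ ?_, ?_⟩
    · rcases eq_or_ne i j with rfl | hi
      · simpa using hδ
      · simpa [hi] using hε i
    · have hcongr : ∑ i ∈ t, Function.update ε j δ i • h i = ∑ i ∈ t, ε i • h i :=
        Finset.sum_congr rfl fun i hi ↦ by
          rw [Function.update_of_ne (ne_of_mem_of_not_mem hi hj)]
      rw [Finset.sum_insert hj, Finset.sum_insert hj, hcongr, Function.update_self,
        add_comm (δ • h j), add_comm (eLpNorm (h j) 2 μ ^ 2)]
      exact (add_le_add_left hsum _).trans hadd

theorem mul_measure_rpow_le_eLpNorm_of_mul_measure_rpow_le_eLpNorm_two [IsFiniteMeasure μ]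
    [NeZero μ] {p : ℝ≥0∞} (hp : 2 ≤ p) {g : α → V} (hg : AEStronglyMeasurable g μ) {A : ℝ≥0∞}
    (hA : A * μ univ ^ (1 / 2 : ℝ) ≤ eLpNorm g 2 μ) :
    A * μ univ ^ (1 / p).toReal ≤ eLpNorm g p μ := by
  have hμ : μ univ ≠ 0 := Measure.measure_univ_ne_zero.mpr (NeZero.ne μ)
  have hμ' : μ univ ≠ ∞ := measure_ne_top μ univ
  have hp' : 1 / p.toReal = (1 / p).toReal := by simp
  have hholder := hA.trans (eLpNorm_le_eLpNorm_mul_rpow_measure_univ hp hg)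
  rw [hp', ENNReal.toReal_ofNat] at hholder
  have hsplit : A * μ univ ^ (1 / 2 : ℝ) =
      A * μ univ ^ (1 / p).toReal * μ univ ^ (1 / 2 - (1 / p).toReal) := by
    rw [mul_assoc, ← ENNReal.rpow_add _ _ hμ hμ', add_sub_cancel]
  rw [hsplit] at hholder
  exact (ENNReal.mul_le_mul_iff_left (ENNReal.rpow_pos hμ.bot_lt hμ').ne'
    (ENNReal.rpow_ne_top_of_ne_zero hμ hμ')).mp hholder

variable (𝕜) in
theorem exists_norm_eq_one_mul_sqrt_card_le_eLpNorm_sum {ι : Type*} {h : ι → α → V} {B : Set α}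
    (hB : MeasurableSet B) (hB₀ : μ B ≠ 0) (hB' : μ B ≠ ∞)
    (hmem : ∀ i, MemLp (h i) 2 (μ.restrict B)) {A : ℝ≥0∞} (hA : ∀ i, ∀ x ∈ B, A ≤ ‖h i x‖ₑ)
    (t : Finset ι) {p : ℝ≥0∞} (hp : 2 ≤ p) :
    ∃ ε : ι → 𝕜, (∀ i, ‖ε i‖ = 1) ∧
      A * (t.card : ℝ≥0∞) ^ (1 / 2 : ℝ) * μ B ^ (1 / p).toReal ≤
        eLpNorm (∑ i ∈ t, ε i • h i) p μ := by
  obtain ⟨ε, hε, hsum⟩ := exists_norm_eq_one_sum_eLpNorm_sq_le 𝕜 hmem t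
  refine ⟨ε, hε, le_trans ?_ (eLpNorm_mono_measure _ (Measure.restrict_le_self (s := B)))⟩
  have : Fact (μ B < ∞) := ⟨hB'.lt_top⟩
  have : NeZero (μ.restrict B) := ⟨by rwa [Ne, Measure.restrict_eq_zero]⟩
  have hsingle : ∀ i, (A * μ B ^ (1 / 2 : ℝ)) ^ 2 ≤ eLpNorm (h i) 2 (μ.restrict B) ^ 2 := by
    intro i
    gcongr
    calc A * μ B ^ (1 / 2 : ℝ) = eLpNorm (fun _ ↦ A) 2 (μ.restrict B) := by
          rw [eLpNorm_const' _ (by norm_num) (by norm_num)]; simp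
      _ ≤ eLpNorm (h i) 2 (μ.restrict B) := eLpNorm_mono_enorm_ae <|
          (ae_restrict_iff' hB).mpr (.of_forall fun x hx ↦ hA i x hx)
  have htotal : (A * (t.card : ℝ≥0∞) ^ (1 / 2 : ℝ) * μ B ^ (1 / 2 : ℝ)) ^ 2 ≤
      eLpNorm (∑ i ∈ t, ε i • h i) 2 (μ.restrict B) ^ 2 := by
    refine le_trans (le_of_eq ?_) ((Finset.sum_le_sum fun i _ ↦ hsingle i).trans hsum)
    rw [Finset.sum_const, nsmul_eq_mul, mul_right_comm, mul_pow _ ((t.card : ℝ≥0∞) ^ _),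
      ← ENNReal.rpow_mul_natCast]
    norm_num [mul_comm]
  have hmeas : AEStronglyMeasurable (∑ i ∈ t, ε i • h i) (μ.restrict B) :=
    (memLp_finsetSum' t fun i _ ↦ (hmem i).const_smul (ε i)).aestronglyMeasurable
  have htwo := (ENNReal.pow_le_pow_left_iff two_ne_zero).mp htotal
  simpa using mul_measure_rpow_le_eLpNorm_of_mul_measure_rpow_le_eLpNorm_two hp hmeas
    (by simpa using htwo)

end UnitCoefficients

theorem eLpNorm_le_eLpNorm_top_rpow_mul_eLpNorm_one_rpow {α V : Type*} [MeasurableSpace α]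
    {μ : Measure α} [NormedAddCommGroup V] {f : α → V} (hf : AEStronglyMeasurable f μ)
    {p : ℝ≥0∞} (hp : 1 ≤ p) :
    eLpNorm f p μ ≤ eLpNorm f ∞ μ ^ (1 - (1 / p).toReal) * eLpNorm f 1 μ ^ (1 / p).toReal := by
  rcases eq_or_ne p ∞ with rfl | hp'
  · simp
  have hp₀ : p ≠ 0 := (zero_lt_one.trans_le hp).ne'
  have hq : 1 ≤ p.toReal := by simpa using ENNReal.toReal_mono hp' hp
  have hpow : ∀ᵐ x ∂μ, ‖f x‖ₑ ^ p.toReal ≤ eLpNorm f ∞ μ ^ (p.toReal - 1) * ‖f x‖ₑ := by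
    filter_upwards [ae_le_eLpNormEssSup (f := f) (μ := μ)] with x hx
    calc ‖f x‖ₑ ^ p.toReal = ‖f x‖ₑ ^ (p.toReal - 1) * ‖f x‖ₑ := by
          nth_rw 3 [← ENNReal.rpow_one ‖f x‖ₑ]
          rw [← ENNReal.rpow_add_of_nonneg _ _ (by linarith) zero_le_one, sub_add_cancel]
      _ ≤ eLpNorm f ∞ μ ^ (p.toReal - 1) * ‖f x‖ₑ := by
          rw [eLpNorm_exponent_top]
          gcongr
  rw [eLpNorm_eq_lintegral_rpow_enorm_toReal hp₀ hp', eLpNorm_one_eq_lintegral_enorm]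
  calc (∫⁻ x, ‖f x‖ₑ ^ p.toReal ∂μ) ^ (1 / p.toReal)
      ≤ (eLpNorm f ∞ μ ^ (p.toReal - 1) * ∫⁻ x, ‖f x‖ₑ ∂μ) ^ (1 / p.toReal) := by
        rw [← lintegral_const_mul'' _ hf.enorm]
        exact ENNReal.rpow_le_rpow (lintegral_mono_ae hpow) (by positivity)
    _ = eLpNorm f ∞ μ ^ (1 - (1 / p).toReal) * (∫⁻ x, ‖f x‖ₑ ∂μ) ^ (1 / p).toReal := by
        rw [ENNReal.mul_rpow_of_nonneg _ _ (by positivity), ← ENNReal.rpow_mul]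
        congr 2
        · rw [ENNReal.toReal_div, ENNReal.toReal_one]
          field_simp
        · simp

section TemperateGrowth

theorem contDiff_fourierChar {k : WithTop ℕ∞} : ContDiff ℝ k fun t : ℝ ↦ (𝐞 t : ℂ) := by
  simp only [Real.fourierChar_apply]
  exact ((Complex.ofRealCLM.contDiff.comp (contDiff_const.mul contDiff_id)).mul
    contDiff_const).cexp

theorem iteratedDeriv_fourierChar (k : ℕ) :
    iteratedDeriv k (fun t : ℝ ↦ (𝐞 t : ℂ)) =
      fun t ↦ (2 * Real.pi * Complex.I) ^ k * (𝐞 t : ℂ) := by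
  induction k with
  | zero => simp
  | succ k ih =>
    ext t
    rw [iteratedDeriv_succ, ih, ((Real.hasDerivAt_fourierChar t).const_mul _).deriv]
    ring

theorem hasTemperateGrowth_fourierChar : Function.HasTemperateGrowth fun t : ℝ ↦ (𝐞 t : ℂ) := by
  refine ⟨contDiff_fourierChar, fun k ↦ ⟨0, (2 * Real.pi) ^ k, fun t ↦ ?_⟩⟩
  rw [norm_iteratedFDeriv_eq_norm_iteratedDeriv, iteratedDeriv_fourierChar]
  simp [abs_of_pos Real.pi_pos, Circle.norm_coe]

theorem hasTemperateGrowth_fourierChar_inner {E : Type*} [NormedAddCommGroup E]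
    [InnerProductSpace ℝ E] (ξ₀ : E) :
    Function.HasTemperateGrowth fun x : E ↦ (𝐞 ⟪ξ₀, x⟫ : ℂ) :=
  hasTemperateGrowth_fourierChar.comp (by fun_prop)

end TemperateGrowth

section FourierTransform

variable {E F : Type*} [NormedAddCommGroup E] [InnerProductSpace ℝ E] [FiniteDimensional ℝ E]
  [MeasurableSpace E] [BorelSpace E]

theorem eLpNorm_comp_smul [NormedAddCommGroup F] (f : E → F) {ρ : ℝ} (hρ : ρ ≠ 0) {p : ℝ≥0∞}
    (hp : p ≠ ∞) :
    eLpNorm (fun x ↦ f (ρ • x)) p volume =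
      ENNReal.ofReal |(ρ ^ Module.finrank ℝ E)⁻¹| ^ (1 / p).toReal * eLpNorm f p volume := by
  have hemb : MeasurableEmbedding (ρ • · : E → E) :=
    (Homeomorph.smulOfNeZero ρ hρ).measurableEmbedding
  rw [← smul_eq_mul, ← eLpNorm_smul_measure_of_ne_top hp, ← Measure.map_addHaar_smul volume hρ,
    hemb.eLpNorm_map_measure]
  rfl

variable [NormedAddCommGroup F] [NormedSpace ℂ F]

theorem fourier_comp_sub_const (f : E → F) (a ξ : E) :
    𝓕 (fun x ↦ f (x - a)) ξ = 𝐞 (-⟪a, ξ⟫) • 𝓕 f ξ := by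
  rw [Real.fourier_eq, Real.fourier_eq, Circle.smul_def, ← integral_smul,
    ← integral_add_right_eq_self _ a]
  refine integral_congr_ae (.of_forall fun x ↦ ?_)
  simp only [add_sub_cancel_right, inner_add_left, neg_add, ← Circle.smul_def, smul_smul,
    AddChar.map_add_eq_mul, mul_comm]

theorem fourier_fourierChar_smul (f : E → F) (ξ₀ ξ : E) :
    𝓕 (fun x ↦ 𝐞 ⟪ξ₀, x⟫ • f x) ξ = 𝓕 f (ξ - ξ₀) := by
  simp only [Real.fourier_eq, smul_smul, ← AddChar.map_add_eq_mul, inner_sub_right, neg_sub',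
    sub_neg_eq_add, real_inner_comm ξ₀, neg_add_eq_sub]

theorem fourier_comp_smul (f : E → F) {ρ : ℝ} (hρ : ρ ≠ 0) (ξ : E) :
    𝓕 (fun x ↦ f (ρ • x)) ξ = |(ρ ^ Module.finrank ℝ E)⁻¹| • 𝓕 f (ρ⁻¹ • ξ) := by
  simp only [Real.fourier_eq]
  rw [← Measure.integral_comp_smul volume (fun x ↦ 𝐞 (-⟪x, ρ⁻¹ • ξ⟫) • f x) ρ]
  simp only [real_inner_smul_left, real_inner_smul_right, inv_mul_cancel_left₀ hρ]

end FourierTransform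

theorem exists_norm_apply_le_mul_inv_one_add_pow {E F : Type*} [NormedAddCommGroup E]
    [NormedSpace ℝ E] [NormedAddCommGroup F] [NormedSpace ℝ F] (φ : 𝓢(E, F)) (k : ℕ) :
    ∃ C > 0, ∀ x, ‖φ x‖ ≤ C * ((1 + ‖x‖) ^ k)⁻¹ := by
  obtain ⟨C, hC⟩ : ∃ C, ∀ x, (1 + ‖x‖) ^ k * ‖iteratedFDeriv ℝ 0 φ x‖ ≤ C :=
    ⟨_, SchwartzMap.one_add_le_sup_seminorm_apply (𝕜 := ℝ) (m := (k, 0)) le_rfl le_rfl φ⟩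
  refine ⟨max C 1, by positivity, fun x ↦ ?_⟩
  rw [← div_eq_mul_inv, le_div_iff₀ (by positivity), mul_comm, ← norm_iteratedFDeriv_zero (𝕜 := ℝ)]
  exact le_max_of_le_left (hC x)

section WavePacket

variable {E : Type*} [NormedAddCommGroup E] [InnerProductSpace ℝ E]

/-- The wave packet `x ↦ e(⟨ξ₀, x - a⟩) φ(ρ(x - a))` of frequency `ξ₀` and width `1/ρ` centred
at `a`, with profile `φ`. -/
def wavePacket (φ : 𝓢(E, ℂ)) {ρ : ℝ} (hρ : ρ ≠ 0) (ξ₀ a : E) : 𝓢(E, ℂ) :=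
  SchwartzMap.compSubConstCLM ℂ a <|
    SchwartzMap.smulLeftCLM ℂ (fun x : E ↦ (𝐞 ⟪ξ₀, x⟫ : ℂ)) <|
      SchwartzMap.compCLMOfContinuousLinearEquiv ℂ
        (ContinuousLinearEquiv.smulLeft (Units.mk0 ρ hρ)) φ

variable (φ : 𝓢(E, ℂ)) {ρ : ℝ} (hρ : ρ ≠ 0) (ξ₀ a : E)

theorem wavePacket_apply (x : E) :
    wavePacket φ hρ ξ₀ a x = 𝐞 ⟪ξ₀, x - a⟫ • φ (ρ • (x - a)) := by
  rw [wavePacket, SchwartzMap.compSubConstCLM_apply,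
    SchwartzMap.smulLeftCLM_apply_apply (hasTemperateGrowth_fourierChar_inner ξ₀)]
  rfl

theorem norm_wavePacket_apply (x : E) : ‖wavePacket φ hρ ξ₀ a x‖ = ‖φ (ρ • (x - a))‖ := by
  rw [wavePacket_apply, Circle.norm_smul]

variable [FiniteDimensional ℝ E] [MeasurableSpace E] [BorelSpace E]

theorem fourier_wavePacket_apply (ξ : E) :
    𝓕 ⇑(wavePacket φ hρ ξ₀ a) ξ =
      𝐞 (-⟪a, ξ⟫) • |(ρ ^ Module.finrank ℝ E)⁻¹| • 𝓕 ⇑φ (ρ⁻¹ • (ξ - ξ₀)) := by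
  rw [funext (wavePacket_apply φ hρ ξ₀ a),
    fourier_comp_sub_const (fun x ↦ 𝐞 ⟪ξ₀, x⟫ • φ (ρ • x)), fourier_fourierChar_smul,
    fourier_comp_smul _ hρ]

theorem eLpNorm_one_wavePacket :
    eLpNorm (wavePacket φ hρ ξ₀ a) 1 volume =
      ENNReal.ofReal |(ρ ^ Module.finrank ℝ E)⁻¹| * eLpNorm φ 1 volume := by
  have hdil : AEStronglyMeasurable (fun x ↦ φ (ρ • x)) volume :=
    Continuous.aestronglyMeasurable (by fun_prop)
  calc eLpNorm (wavePacket φ hρ ξ₀ a) 1 volume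
      = eLpNorm ((fun x ↦ φ (ρ • x)) ∘ (· - a)) 1 volume :=
        eLpNorm_congr_norm_ae (.of_forall (norm_wavePacket_apply φ hρ ξ₀ a))
    _ = eLpNorm (fun x ↦ φ (ρ • x)) 1 volume :=
        eLpNorm_comp_measurePreserving hdil (measurePreserving_sub_right volume a)
    _ = _ := by simp [eLpNorm_comp_smul φ hρ ENNReal.one_ne_top]

end WavePacket

section WaveProfile

variable {E : Type*} [NormedAddCommGroup E] [InnerProductSpace ℝ E] [FiniteDimensional ℝ E]
  [MeasurableSpace E] [BorelSpace E]

/-- A wave profile: a Schwartz function with nonnegative real values, nonzero at the origin, whose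
Fourier transform vanishes outside the unit ball. -/
structure IsWaveProfile (φ : 𝓢(E, ℂ)) : Prop where
  norm_apply : ∀ x, (‖φ x‖ : ℂ) = φ x
  apply_zero_ne_zero : φ 0 ≠ 0
  fourier_eq_zero : ∀ ξ, 1 ≤ ‖ξ‖ → 𝓕 ⇑φ ξ = 0

theorem fourier_wavePacket_eq_zero {φ : 𝓢(E, ℂ)} (hφ : IsWaveProfile φ) {ρ : ℝ} (hρ : 0 < ρ)
    (ξ₀ a : E) {ξ : E} (hξ : ρ ≤ ‖ξ - ξ₀‖) : 𝓕 ⇑(wavePacket φ hρ.ne' ξ₀ a) ξ = 0 := by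
  rw [fourier_wavePacket_apply, hφ.fourier_eq_zero, smul_zero, smul_zero]
  rwa [norm_smul, norm_inv, Real.norm_of_nonneg hρ.le, inv_mul_eq_div, one_le_div hρ]

theorem conj_fourier_eq_of_conj_eq_of_even {f : E → ℂ} (hreal : ∀ x, starRingEnd ℂ (f x) = f x)
    (heven : ∀ x, f (-x) = f x) (ξ : E) : starRingEnd ℂ (𝓕 f ξ) = 𝓕 f ξ := by
  rw [Real.fourier_eq', ← integral_conj, ← integral_neg_eq_self]
  refine integral_congr_ae (.of_forall fun x ↦ ?_)
  simp [← Complex.exp_conj, hreal, heven, Complex.conj_ofNat]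

theorem convolution_apply_eq_zero_of_add_le_norm {f g : E → ℂ} {r s : ℝ}
    (hf : ∀ x, r ≤ ‖x‖ → f x = 0) (hg : ∀ x, s ≤ ‖x‖ → g x = 0) {x : E} (hx : r + s ≤ ‖x‖) :
    (f ⋆[ContinuousLinearMap.mul ℂ ℂ] g) x = 0 := by
  rw [convolution_def]
  refine integral_eq_zero_of_ae (.of_forall fun t ↦ ?_)
  rcases le_or_gt r ‖t‖ with ht | ht
  · simp [hf t ht]
  · have := norm_sub_norm_le x t
    simp [hg (x - t) (by linarith)]

-- Convolving on the Fourier side squares a real function, hence makes it nonnegative.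
theorem isWaveProfile_fourierInv_convolution {ψ : 𝓢(E, ℂ)}
    (hreal : ∀ x, starRingEnd ℂ (ψ x) = ψ x) (heven : ∀ x, ψ (-x) = ψ x)
    (hsupp : ∀ x, 1 / 2 ≤ ‖x‖ → ψ x = 0) (hint : ∫ x, ψ x ≠ 0) :
    IsWaveProfile (𝓕⁻ (SchwartzMap.convolution (ContinuousLinearMap.mul ℂ ℂ) ψ ψ)) := by
  set S := SchwartzMap.convolution (ContinuousLinearMap.mul ℂ ℂ) ψ ψ with hS
  have hconv (x : E) : (𝓕⁻ S : 𝓢(E, ℂ)) x = 𝓕 ⇑ψ (-x) * 𝓕 ⇑ψ (-x) := by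
    rw [SchwartzMap.fourierInv_apply_eq, hS, SchwartzMap.fourier_convolution]
    rfl
  refine ⟨fun x ↦ ?_, ?_, fun ξ hξ ↦ ?_⟩
  · rw [hconv, ← Complex.conj_eq_iff_re.mp (conj_fourier_eq_of_conj_eq_of_even hreal heven (-x)),
      ← Complex.ofReal_mul, Complex.norm_real, Real.norm_of_nonneg (mul_self_nonneg _)]
  · have hzero : 𝓕 ⇑ψ (-0) = ∫ x, ψ x := by simp [Real.fourier_eq]
    rw [hconv, hzero]
    exact mul_ne_zero hint hint
  · rw [← SchwartzMap.fourier_coe, FourierTransform.fourier_fourierInv_eq, hS,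
      SchwartzMap.convolution_apply]
    exact convolution_apply_eq_zero_of_add_le_norm hsupp hsupp (by linarith)

theorem exists_isWaveProfile : ∃ φ : 𝓢(E, ℂ), IsWaveProfile φ := by
  let b : ContDiffBump (0 : E) := ⟨1 / 4, 1 / 2, by norm_num, by norm_num⟩
  let ψ : 𝓢(E, ℂ) := (b.hasCompactSupport.comp_left Complex.ofReal_zero).toSchwartzMap
    (Complex.ofRealCLM.contDiff.comp b.contDiff)
  have hψ (x : E) : ψ x = (b x : ℂ) := rfl
  refine ⟨_, isWaveProfile_fourierInv_convolution (ψ := ψ) (fun x ↦ by simp [hψ])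
    (fun x ↦ by simp [hψ, b.neg]) (fun x hx ↦ ?_) ?_⟩
  · rw [hψ, b.zero_of_le_dist (by rwa [dist_zero_right]), Complex.ofReal_zero]
  · simp only [hψ, integral_complex_ofReal]
    exact_mod_cast b.integral_pos.ne'

/-- The Schwartz functions whose Fourier transform vanishes off `T`. -/
def bandLimited (T : Set E) : Submodule ℂ 𝓢(E, ℂ) where
  carrier := {f | ∀ ξ ∉ T, 𝓕 ⇑f ξ = 0}
  zero_mem' ξ _ := by simp [Real.fourier_eq]
  add_mem' {f g} hf hg ξ hξ := by
    rw [← SchwartzMap.fourier_coe, FourierTransform.fourier_add, add_apply,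
      SchwartzMap.fourier_coe, SchwartzMap.fourier_coe, hf ξ hξ, hg ξ hξ, add_zero]
  smul_mem' c f hf ξ hξ := by
    rw [← SchwartzMap.fourier_coe, FourierTransform.fourier_smul, smul_apply,
      SchwartzMap.fourier_coe, hf ξ hξ, smul_zero]

theorem tsupport_fourier_subset_of_mem_bandLimited {T : Set E} (hT : IsClosed T) {f : 𝓢(E, ℂ)}
    (hf : f ∈ bandLimited T) : tsupport (𝓕 ⇑f) ⊆ T :=
  closure_minimal (fun ξ hξ ↦ by_contra fun hξT ↦ hξ (hf ξ hξT)) hT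

end WaveProfile

section AvgOp

variable {n : ℕ} {γ : ℝ → Euc n} {χ : ℝ → ℝ} {f : Euc n → ℂ} {C : ℝ}

theorem norm_avgOp_integrand_le (hC : ∀ x, ‖f x‖ ≤ C) (x : Euc n) (s : ℝ) :
    ‖f (x - γ s) * (χ s : ℂ)‖ ≤ C * ‖χ s‖ := by
  rw [norm_mul, Complex.norm_real]
  gcongr
  exact hC _

theorem integrable_avgOp_integrand (hγ : Continuous γ) (hχ : Integrable χ) (hf : Continuous f)
    (hC : ∀ x, ‖f x‖ ≤ C) (x : Euc n) : Integrable fun s ↦ f (x - γ s) * (χ s : ℂ) :=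
  (hχ.norm.const_mul C).mono'
    ((hf.comp (by fun_prop)).aestronglyMeasurable.mul hχ.ofReal.aestronglyMeasurable)
    (.of_forall (norm_avgOp_integrand_le hC x))

theorem norm_avgOp_le (hχ : Integrable χ) (hC : ∀ x, ‖f x‖ ≤ C) (x : Euc n) :
    ‖avgOp γ χ f x‖ ≤ C * ∫ s, ‖χ s‖ :=
  (norm_integral_le_of_norm_le (hχ.norm.const_mul C)
    (.of_forall (norm_avgOp_integrand_le hC x))).trans_eq (integral_const_mul _ _)

theorem continuous_avgOp (hγ : Continuous γ) (hχ : Integrable χ) (hf : Continuous f)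
    (hC : ∀ x, ‖f x‖ ≤ C) : Continuous (avgOp γ χ f) :=
  continuous_of_dominated
    (fun x ↦ (integrable_avgOp_integrand hγ hχ hf hC x).aestronglyMeasurable)
    (fun x ↦ .of_forall (norm_avgOp_integrand_le hC x)) (hχ.norm.const_mul C)
    (.of_forall fun s ↦ by fun_prop)

theorem exists_norm_apply_le {E F : Type*} [NormedAddCommGroup E] [NormedSpace ℝ E]
    [NormedAddCommGroup F] [NormedSpace ℝ F] (φ : 𝓢(E, F)) : ∃ C, ∀ x, ‖φ x‖ ≤ C :=
  ⟨_, φ.toBoundedContinuousFunction.norm_coe_le_norm⟩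

theorem avgOp_sum_smul {ι : Type*} (hγ : Continuous γ) (hχ : Integrable χ) (t : Finset ι)
    (ε : ι → ℂ) (f : ι → 𝓢(Euc n, ℂ)) :
    avgOp γ χ ⇑(∑ i ∈ t, ε i • f i) = ∑ i ∈ t, ε i • avgOp γ χ (f i) := by
  ext x
  have hint (i : ι) : Integrable fun s ↦ f i (x - γ s) * (χ s : ℂ) := by
    obtain ⟨C, hC⟩ := exists_norm_apply_le (f i)
    exact integrable_avgOp_integrand hγ hχ (f i).continuous hC x
  simp only [avgOp, Finset.sum_apply, Pi.smul_apply, ← integral_smul]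
  have hsum := integral_finsetSum t fun i _ ↦ (hint i).smul (ε i)
  simp only [Pi.smul_apply] at hsum
  rw [← hsum]
  simp [sum_apply, Finset.sum_mul, mul_assoc]

theorem memLp_avgOp {μ : Measure (Euc n)} [IsFiniteMeasure μ] (hγ : Continuous γ)
    (hχ : Integrable χ) (f : 𝓢(Euc n, ℂ)) (p : ℝ≥0∞) : MemLp (avgOp γ χ f) p μ := by
  obtain ⟨C, hC⟩ := exists_norm_apply_le f
  exact .of_bound (continuous_avgOp hγ hχ f.continuous hC).aestronglyMeasurable _
    (.of_forall (norm_avgOp_le hχ hC))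

/-- The lower bound `c ‖f‖_p ≤ ‖A_γ f‖_p` is attained by some nonzero Schwartz function `f` in the
class `Z_λ` of functions with frequencies in the annulus `λ/2 ≤ |ξ| ≤ 2λ`. -/
def HasLowerBoundAt (γ : ℝ → Euc n) (χ : ℝ → ℝ) (p : ℝ≥0∞) (lam c : ℝ) : Prop :=
  ∃ f : 𝓢(Euc n, ℂ), f ≠ 0 ∧
    tsupport (𝓕 ⇑f) ⊆ {ξ : Euc n | lam / 2 ≤ ‖ξ‖ ∧ ‖ξ‖ ≤ 2 * lam} ∧
    ENNReal.ofReal c * eLpNorm (⇑f) p volume ≤ eLpNorm (avgOp γ χ ⇑f) p volume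

theorem HasLowerBoundAt.mono {p : ℝ≥0∞} {lam c d : ℝ} (hcd : c ≤ d)
    (h : HasLowerBoundAt γ χ p lam d) : HasLowerBoundAt γ χ p lam c := by
  obtain ⟨f, hf, hsupp, hle⟩ := h
  exact ⟨f, hf, hsupp, le_trans (by gcongr) hle⟩

theorem isClosed_annulus {E : Type*} [SeminormedAddCommGroup E] (r R : ℝ) :
    IsClosed {ξ : E | r ≤ ‖ξ‖ ∧ ‖ξ‖ ≤ R} :=
  (isClosed_le continuous_const continuous_norm).inter
    (isClosed_le continuous_norm continuous_const)

end AvgOp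

section PhaseError

theorem integral_sub_integral_norm_sub_one_mul_le_norm_integral {α : Type*} [MeasurableSpace α]
    {μ : Measure α} {u : α → ℂ} {w : α → ℝ} (hu : AEStronglyMeasurable u μ)
    (hu₁ : ∀ x, ‖u x‖ = 1) (hw : Integrable w μ) (hw₀ : ∀ x, 0 ≤ w x) :
    ∫ x, w x ∂μ - ∫ x, ‖u x - 1‖ * w x ∂μ ≤ ‖∫ x, u x * w x ∂μ‖ := by
  have huw : Integrable (fun x ↦ u x * w x) μ :=
    hw.ofReal.bdd_mul hu (.of_forall fun x ↦ (hu₁ x).le)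
  have hdiff : ‖∫ x, u x * w x ∂μ - ∫ x, (w x : ℂ) ∂μ‖ ≤ ∫ x, ‖u x - 1‖ * w x ∂μ := by
    have hwc : Integrable (fun x ↦ (w x : ℂ)) μ := hw.ofReal
    rw [← integral_sub huw hwc]
    refine (norm_integral_le_integral_norm _).trans_eq (integral_congr_ae (.of_forall fun x ↦ ?_))
    simp only
    rw [← sub_one_mul, norm_mul, Complex.norm_real, Real.norm_of_nonneg (hw₀ x)]
  have hnorm : ‖∫ x, (w x : ℂ) ∂μ‖ = ∫ x, w x ∂μ := by
    rw [integral_complex_ofReal, Complex.norm_real,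
      Real.norm_of_nonneg (integral_nonneg hw₀)]
  linarith [norm_sub_norm_le (∫ x, (w x : ℂ) ∂μ) (∫ x, u x * w x ∂μ),
    norm_sub_rev (∫ x, (w x : ℂ) ∂μ) (∫ x, u x * w x ∂μ)]

theorem norm_fourierChar_sub_one_le (θ : ℝ) : ‖(𝐞 θ : ℂ) - 1‖ ≤ 2 * Real.pi * |θ| := by
  have h := Real.norm_exp_I_mul_ofReal_sub_one_le (x := 2 * Real.pi * θ)
  rw [mul_comm Complex.I, Real.norm_eq_abs, abs_mul, abs_of_pos Real.two_pi_pos] at h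
  rwa [Real.fourierChar_apply]

theorem norm_fourierChar_sub_one_le_of_le_pow {θ D τ : ℝ} {k : ℕ} (hk : k ≠ 0) (hD : 0 ≤ D)
    (hτ : 0 ≤ τ) (hθ : |θ| ≤ D * τ ^ k) : ‖(𝐞 θ : ℂ) - 1‖ ≤ 2 * (Real.pi * D + 1) * τ := by
  have hπD : 0 ≤ Real.pi * D := by positivity
  rcases le_total τ 1 with hτ₁ | hτ₁
  · calc ‖(𝐞 θ : ℂ) - 1‖ ≤ 2 * Real.pi * |θ| := norm_fourierChar_sub_one_le θ
      _ ≤ 2 * Real.pi * (D * τ) := by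
        gcongr
        exact hθ.trans (by gcongr; exact pow_le_of_le_one hτ hτ₁ hk)
      _ ≤ 2 * (Real.pi * D + 1) * τ := by linarith
  · calc ‖(𝐞 θ : ℂ) - 1‖ ≤ ‖(𝐞 θ : ℂ)‖ + ‖(1 : ℂ)‖ := norm_sub_le _ _
      _ = 2 * 1 * 1 := by rw [Circle.norm_coe]; norm_num
      _ ≤ 2 * (Real.pi * D + 1) * τ := by gcongr; linarith

theorem integrable_inv_one_add_mul_sub_sq {κ : ℝ} (hκ : κ ≠ 0) (s₁ : ℝ) :
    Integrable fun s : ℝ ↦ (1 + (κ * (s - s₁)) ^ 2)⁻¹ :=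
  (integrable_inv_one_add_sq.comp_mul_left' hκ).comp_sub_right s₁

theorem integral_inv_one_add_mul_sub_sq {κ : ℝ} (hκ : 0 < κ) (s₁ : ℝ) :
    ∫ s : ℝ, (1 + (κ * (s - s₁)) ^ 2)⁻¹ = Real.pi / κ := by
  rw [integral_sub_right_eq_self (fun s ↦ (1 + (κ * s) ^ 2)⁻¹) s₁,
    Measure.integral_comp_mul_left (fun s ↦ (1 + s ^ 2)⁻¹) κ, integral_univ_inv_one_add_sq,
    abs_of_pos (inv_pos.2 hκ), smul_eq_mul, inv_mul_eq_div]

end PhaseError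

section ProfileAlongCurve

variable {E F : Type*} [NormedAddCommGroup E] [NormedSpace ℝ E] [NormedAddCommGroup F]

theorem exists_pos_forall_norm_le_imp_le_norm_apply {E F : Type*} [SeminormedAddCommGroup E]
    [NormedAddCommGroup F] {φ : E → F} (hφ : Continuous φ) (hφ₀ : φ 0 ≠ 0) :
    ∃ m > 0, ∃ δ > 0, ∀ y, ‖y‖ ≤ δ → m ≤ ‖φ y‖ := by
  have hφ₀' : ‖φ 0‖ / 2 < ‖φ 0‖ := half_lt_self (norm_pos_iff.2 hφ₀)
  have hnhds : {y | ‖φ 0‖ / 2 < ‖φ y‖} ∈ 𝓝 (0 : E) :=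
    hφ.norm.continuousAt.eventually (lt_mem_nhds hφ₀')
  obtain ⟨δ, hδ, hball⟩ := Metric.nhds_basis_closedBall.mem_iff.1 hnhds
  exact ⟨_, half_pos (norm_pos_iff.2 hφ₀), δ, hδ, fun y hy ↦
    (hball (mem_closedBall_zero_iff.2 hy)).le⟩

theorem le_integral_of_forall_mem_Icc {w : ℝ → ℝ} (hw : Integrable w) (hw₀ : ∀ s, 0 ≤ w s)
    {s₁ ℓ v : ℝ} (hℓ : 0 ≤ ℓ) (hv : ∀ s ∈ Icc s₁ (s₁ + ℓ), v ≤ w s) : ℓ * v ≤ ∫ s, w s :=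
  calc ℓ * v = ∫ _ in Icc s₁ (s₁ + ℓ), v := by simp [hℓ]
    _ ≤ ∫ s in Icc s₁ (s₁ + ℓ), w s :=
      setIntegral_mono_on (by simp) hw.integrableOn measurableSet_Icc hv
    _ ≤ ∫ s, w s := setIntegral_le_integral hw (.of_forall hw₀)

theorem integrable_norm_comp_smul_sub_mul {φ : E → F} (hφ : Continuous φ) {γ : ℝ → E}
    (hγ : Continuous γ) {χ : ℝ → ℝ} (hχ : Continuous χ) (hχc : HasCompactSupport χ)
    (ρ : ℝ) (x v : E) : Integrable fun s ↦ ‖φ (ρ • (x - (γ s - v)))‖ * χ s :=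
  Continuous.integrable_of_hasCompactSupport (by fun_prop) hχc.mul_left

theorem norm_smul_sub_le_of_norm_le_div {ρ δ : ℝ} (hρ : 0 < ρ) {x v : E} (hx : ‖x‖ ≤ δ / 2 / ρ)
    (hv : ‖v‖ ≤ δ / 2 / ρ) : ‖ρ • (x - v)‖ ≤ δ :=
  calc ‖ρ • (x - v)‖ ≤ ρ * (δ / 2 / ρ + δ / 2 / ρ) := by
        rw [norm_smul, Real.norm_of_nonneg hρ.le]
        gcongr
        exact (norm_sub_le _ _).trans (add_le_add hx hv)
    _ = δ := by field_simp; ring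

theorem exists_div_le_integral_norm_comp_smul_sub_mul {φ : E → F} (hφ : Continuous φ)
    (hφ₀ : φ 0 ≠ 0) {γ : ℝ → E} (hγ : Continuous γ) {χ : ℝ → ℝ} (hχ : Continuous χ)
    (hχc : HasCompactSupport χ) (hχ₀ : ∀ s, 0 ≤ χ s) {s₀ η m₀ : ℝ} {K : NNReal} (hη : 0 < η)
    (hm₀ : 0 < m₀) (hγK : LipschitzOnWith K γ (Icc s₀ (s₀ + 2 * η)))
    (hχm : ∀ s ∈ Icc s₀ (s₀ + 2 * η), m₀ ≤ χ s) :
    ∃ A > 0, ∃ r > 0, ∀ ρ, 1 ≤ ρ → ∀ s₁ ∈ Icc s₀ (s₀ + η), ∀ x, ‖x‖ ≤ r / ρ →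
      A / ρ ≤ ∫ s, ‖φ (ρ • (x - (γ s - γ s₁)))‖ * χ s := by
  obtain ⟨m, hm, δ, hδ, hφδ⟩ := exists_pos_forall_norm_le_imp_le_norm_apply hφ hφ₀
  set κ : ℝ := min η (δ / (2 * (K + 1)))
  have hκ₀ : 0 < κ := lt_min hη (by positivity)
  refine ⟨κ * (m * m₀), by positivity, δ / 2, by positivity, fun ρ hρ s₁ hs₁ x hx ↦ ?_⟩
  have hρ₀ : 0 < ρ := one_pos.trans_le hρ
  have hκρ : κ / ρ ≤ η := (div_le_self hκ₀.le hρ).trans (min_le_left _ _)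
  rw [mul_div_right_comm]
  refine le_integral_of_forall_mem_Icc (integrable_norm_comp_smul_sub_mul hφ hγ hχ hχc ρ x _)
    (fun s ↦ by have := hχ₀ s; positivity) (s₁ := s₁) (by positivity) fun s hs ↦ ?_
  have hs' : s ∈ Icc s₀ (s₀ + 2 * η) := ⟨by linarith [hs.1, hs₁.1], by linarith [hs.2, hs₁.2]⟩
  have hs₁' : s₁ ∈ Icc s₀ (s₀ + 2 * η) := ⟨hs₁.1, by linarith [hs₁.2]⟩
  have hγs : ‖γ s - γ s₁‖ ≤ δ / 2 / ρ :=
    calc ‖γ s - γ s₁‖ ≤ K * ‖s - s₁‖ := hγK.norm_sub_le hs' hs₁'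
      _ ≤ (K + 1) * (δ / (2 * (K + 1)) / ρ) := by
        have hs₀ : 0 ≤ s - s₁ := sub_nonneg.2 hs.1
        rw [Real.norm_of_nonneg hs₀]
        gcongr
        · linarith
        · exact (sub_le_iff_le_add'.2 hs.2).trans
            (div_le_div_of_nonneg_right (min_le_right _ _) hρ₀.le)
      _ = δ / 2 / ρ := by field_simp
  gcongr
  · exact hφδ _ (norm_smul_sub_le_of_norm_le_div hρ₀ hx hγs)
  · exact hχm s hs'

theorem exists_mul_norm_apply_le_inv_one_add_sq [NormedSpace ℝ F] (φ : 𝓢(E, F)) :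
    ∃ C > 0, ∀ y T, 0 ≤ T → T ≤ 1 + ‖y‖ → T * ‖φ y‖ ≤ C * (1 + T ^ 2)⁻¹ := by
  obtain ⟨C, hC, hφ⟩ := exists_norm_apply_le_mul_inv_one_add_pow φ 3
  refine ⟨2 * C, by positivity, fun y T hT hTy ↦ ?_⟩
  set Z : ℝ := 1 + ‖y‖
  have hZ : 1 ≤ Z := le_add_of_nonneg_right (norm_nonneg y)
  have hcubic : T * (1 + T ^ 2) ≤ 2 * Z ^ 3 :=
    calc T * (1 + T ^ 2) ≤ Z * (Z ^ 2 + Z ^ 2) := by gcongr; exact one_le_pow₀ hZ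
      _ = 2 * Z ^ 3 := by ring
  rw [← div_eq_mul_inv, le_div_iff₀ (by positivity)]
  calc T * ‖φ y‖ * (1 + T ^ 2) = ‖φ y‖ * (T * (1 + T ^ 2)) := by ring
    _ ≤ C * (Z ^ 3)⁻¹ * (2 * Z ^ 3) := by gcongr; exact hφ y
    _ = 2 * C := by field_simp

theorem mul_abs_sub_le_one_add_norm_smul_sub {γ : ℝ → E} {c ρ s s₁ : ℝ} {x : E} (hρ : 0 < ρ)
    (hsep : c * |s - s₁| ≤ ‖γ s - γ s₁‖) (hx : ‖x‖ ≤ 1 / ρ) :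
    c * ρ * |s - s₁| ≤ 1 + ‖ρ • (x - (γ s - γ s₁))‖ := by
  have hγx : ‖γ s - γ s₁‖ ≤ 1 / ρ + ‖x - (γ s - γ s₁)‖ := by
    linarith [norm_sub_norm_le (γ s - γ s₁) x, norm_sub_rev (γ s - γ s₁) x]
  calc c * ρ * |s - s₁| = ρ * (c * |s - s₁|) := by ring
    _ ≤ ρ * (1 / ρ + ‖x - (γ s - γ s₁)‖) := by gcongr; exact hsep.trans hγx
    _ = 1 + ‖ρ • (x - (γ s - γ s₁))‖ := by
      rw [norm_smul, Real.norm_of_nonneg hρ.le, mul_add, mul_one_div_cancel hρ.ne']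

theorem exists_integral_abs_sub_mul_norm_le [NormedSpace ℝ F] (φ : 𝓢(E, F)) {γ : ℝ → E}
    {χ : ℝ → ℝ} {I : Set ℝ} {c X : ℝ} (hc : 0 < c)
    (hsep : ∀ s ∈ I, ∀ t ∈ I, c * |s - t| ≤ ‖γ s - γ t‖) (hχI : Function.support χ ⊆ I)
    (hχ₀ : ∀ s, 0 ≤ χ s) (hχX : ∀ s, χ s ≤ X) :
    ∃ B, ∀ ρ > 0, ∀ s₁ ∈ I, ∀ x, ‖x‖ ≤ 1 / ρ →
      ∫ s, |s - s₁| * (‖φ (ρ • (x - (γ s - γ s₁)))‖ * χ s) ≤ B / ρ ^ 2 := by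
  obtain ⟨C, hC, hφ⟩ := exists_mul_norm_apply_le_inv_one_add_sq φ
  have hX : 0 ≤ X := (hχ₀ 0).trans (hχX 0)
  refine ⟨C * X * Real.pi / c ^ 2, fun ρ hρ s₁ hs₁ x hx ↦ ?_⟩
  have hcρ : 0 < c * ρ := by positivity
  have hpoint (s : ℝ) : |s - s₁| * (‖φ (ρ • (x - (γ s - γ s₁)))‖ * χ s) ≤
      C * X / (c * ρ) * (1 + (c * ρ * (s - s₁)) ^ 2)⁻¹ := by
    by_cases hs : s ∈ I
    swap
    · rw [Function.notMem_support.1 fun h ↦ hs (hχI h), mul_zero, mul_zero]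
      positivity
    set y := ρ • (x - (γ s - γ s₁))
    calc |s - s₁| * (‖φ y‖ * χ s) ≤ |s - s₁| * (‖φ y‖ * X) := by gcongr; exact hχX s
      _ = X / (c * ρ) * (c * ρ * |s - s₁| * ‖φ y‖) := by field_simp
      _ ≤ X / (c * ρ) * (C * (1 + (c * ρ * |s - s₁|) ^ 2)⁻¹) :=
        mul_le_mul_of_nonneg_left (hφ y _ (by positivity)
          (mul_abs_sub_le_one_add_norm_smul_sub hρ (hsep s hs s₁ hs₁) hx)) (by positivity)
      _ = C * X / (c * ρ) * (1 + (c * ρ * (s - s₁)) ^ 2)⁻¹ := by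
        rw [mul_pow _ |s - s₁|, sq_abs, ← mul_pow]; ring
  refine (integral_mono_of_nonneg (.of_forall fun s ↦ ?_)
    ((integrable_inv_one_add_mul_sub_sq hcρ.ne' s₁).const_mul _) (.of_forall hpoint)).trans_eq ?_
  · exact mul_nonneg (abs_nonneg _) (mul_nonneg (norm_nonneg _) (hχ₀ s))
  · rw [integral_const_mul, integral_inv_one_add_mul_sub_sq hcρ]
    field_simp

end ProfileAlongCurve

section PacketAverage

variable {n : ℕ} {γ : ℝ → Euc n} {χ : ℝ → ℝ} {φ : 𝓢(Euc n, ℂ)}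

theorem norm_avgOp_wavePacket (hφ : IsWaveProfile φ) {ρ : ℝ} (hρ : ρ ≠ 0) (ξ x : Euc n) (s₁ : ℝ) :
    ‖avgOp γ χ (wavePacket φ hρ ξ (-γ s₁)) x‖ =
      ‖∫ s, (𝐞 (-⟪ξ, γ s - γ s₁⟫) : ℂ) *
        ((‖φ (ρ • (x - (γ s - γ s₁)))‖ * χ s : ℝ) : ℂ)‖ := by
  have hintegrand (s : ℝ) : wavePacket φ hρ ξ (-γ s₁) (x - γ s) * (χ s : ℂ) =
      (𝐞 ⟪ξ, x⟫ : ℂ) * ((𝐞 (-⟪ξ, γ s - γ s₁⟫) : ℂ) *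
        ((‖φ (ρ • (x - (γ s - γ s₁)))‖ * χ s : ℝ) : ℂ)) := by
    have hsub : x - γ s - -γ s₁ = x - (γ s - γ s₁) := by abel
    rw [wavePacket_apply, hsub, inner_sub_right, sub_eq_add_neg, AddChar.map_add_eq_mul,
      Circle.smul_def, Circle.coe_mul, Complex.ofReal_mul, hφ.norm_apply, smul_eq_mul]
    ring
  simp only [avgOp, hintegrand]
  rw [integral_const_mul, norm_mul, Circle.norm_coe, one_mul]

theorem integral_norm_fourierChar_sub_one_mul_le {w : ℝ → ℝ} (hw : Continuous w)
    (hwc : HasCompactSupport w) (hw₀ : ∀ s, 0 ≤ w s) {θ : ℝ → ℝ} {D L s₁ : ℝ} {k : ℕ}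
    (hk : k ≠ 0) (hD : 0 ≤ D) (hL : 0 ≤ L)
    (hθ : ∀ s ∈ Function.support w, |θ s| ≤ D * (L * |s - s₁|) ^ k) :
    ∫ s, ‖(𝐞 (θ s) : ℂ) - 1‖ * w s ≤ 2 * (Real.pi * D + 1) * L * ∫ s, |s - s₁| * w s := by
  rw [← integral_const_mul]
  refine integral_mono_of_nonneg (.of_forall fun s ↦ mul_nonneg (norm_nonneg _) (hw₀ s))
    (Continuous.integrable_of_hasCompactSupport (by fun_prop) hwc.mul_left.mul_left)
    (.of_forall fun s ↦ ?_)
  by_cases hs : w s = 0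
  · simp [hs]
  · calc ‖(𝐞 (θ s) : ℂ) - 1‖ * w s ≤ 2 * (Real.pi * D + 1) * (L * |s - s₁|) * w s :=
          mul_le_mul_of_nonneg_right
            (norm_fourierChar_sub_one_le_of_le_pow hk hD (by positivity) (hθ s hs)) (hw₀ s)
      _ = 2 * (Real.pi * D + 1) * L * (|s - s₁| * w s) := by ring

theorem sub_le_norm_avgOp_wavePacket (hφ : IsWaveProfile φ) (hγ : Continuous γ) (hχ : Continuous χ)
    (hχc : HasCompactSupport χ) (hχ₀ : ∀ s, 0 ≤ χ s) {ρ D L s₁ : ℝ} {k : ℕ} (hρ : ρ ≠ 0)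
    (hk : k ≠ 0) (hD : 0 ≤ D) (hL : 0 ≤ L) {ξ : Euc n}
    (hξ : ∀ s ∈ Function.support χ, |⟪ξ, γ s - γ s₁⟫| ≤ D * (L * |s - s₁|) ^ k) (x : Euc n) :
    (∫ s, ‖φ (ρ • (x - (γ s - γ s₁)))‖ * χ s) - 2 * (Real.pi * D + 1) * L *
        ∫ s, |s - s₁| * (‖φ (ρ • (x - (γ s - γ s₁)))‖ * χ s) ≤
      ‖avgOp γ χ (wavePacket φ hρ ξ (-γ s₁)) x‖ := by
  set w : ℝ → ℝ := fun s ↦ ‖φ (ρ • (x - (γ s - γ s₁)))‖ * χ s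
  have hφc := φ.continuous
  have hwcont : Continuous w := by fun_prop
  have hwc : HasCompactSupport w := hχc.mul_left
  have hw₀ (s : ℝ) : 0 ≤ w s := mul_nonneg (norm_nonneg _) (hχ₀ s)
  have hchar : Continuous fun s ↦ (𝐞 (-⟪ξ, γ s - γ s₁⟫) : ℂ) :=
    continuous_subtype_val.comp (Real.continuous_fourierChar.comp (by fun_prop))
  rw [norm_avgOp_wavePacket hφ]
  refine le_trans (sub_le_sub_left ?_ _)
    (integral_sub_integral_norm_sub_one_mul_le_norm_integral hchar.aestronglyMeasurable
      (fun s ↦ Circle.norm_coe _) (hwcont.integrable_of_hasCompactSupport hwc) hw₀)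
  refine integral_norm_fourierChar_sub_one_mul_le hwcont hwc hw₀ hk hD hL fun s hs ↦ ?_
  rw [abs_neg]
  exact hξ s (Function.support_mul_subset_right _ _ hs)

theorem exists_div_le_norm_avgOp_wavePacket (hφ : IsWaveProfile φ) (hγ : Continuous γ)
    (hχ : Continuous χ) (hχc : HasCompactSupport χ) (hχ₀ : ∀ s, 0 ≤ χ s) {s₀ η m₀ c D : ℝ}
    {K : NNReal} {I : Set ℝ} {k : ℕ} (hη : 0 < η) (hm₀ : 0 < m₀)
    (hχm : ∀ s ∈ Icc s₀ (s₀ + 2 * η), m₀ ≤ χ s) (hχI : Function.support χ ⊆ I)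
    (hγK : LipschitzOnWith K γ I) (hc : 0 < c)
    (hsep : ∀ s ∈ I, ∀ t ∈ I, c * |s - t| ≤ ‖γ s - γ t‖) (hk : k ≠ 0) (hD : 0 ≤ D) :
    ∃ A > 0, ∃ r > 0, ∃ R ≥ 1, ∀ L ≥ 1, ∀ ρ (hρ : ρ ≠ 0), R * L ≤ ρ →
      ∀ s₁ ∈ Icc s₀ (s₀ + η), ∀ ξ : Euc n,
      (∀ s ∈ I, |⟪ξ, γ s - γ s₁⟫| ≤ D * (L * |s - s₁|) ^ k) →
      ∀ x ∈ Metric.closedBall 0 (r / ρ),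
        A / ρ ≤ ‖avgOp γ χ (wavePacket φ hρ ξ (-γ s₁)) x‖ := by
  have hJI : Icc s₀ (s₀ + 2 * η) ⊆ I := fun s hs ↦ hχI (hm₀.trans_le (hχm s hs)).ne'
  obtain ⟨X, hX⟩ := hχ.bounded_above_of_compact_support hχc
  obtain ⟨A, hA, r, hr, hmain⟩ := exists_div_le_integral_norm_comp_smul_sub_mul φ.continuous
    hφ.apply_zero_ne_zero hγ hχ hχc hχ₀ hη hm₀ (hγK.mono hJI) hχm
  obtain ⟨B, herror⟩ := exists_integral_abs_sub_mul_norm_le φ hc hsep hχI hχ₀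
    fun s ↦ (le_abs_self _).trans (hX s)
  set B' : ℝ := 2 * (Real.pi * D + 1) * B
  refine ⟨A / 2, by positivity, min r 1, by positivity, max 1 (2 * B' / A), le_max_left _ _,
    fun L hL ρ hρ' hRL s₁ hs₁ ξ hξ x hx ↦ ?_⟩
  have hρ : 1 ≤ ρ := by nlinarith [le_max_left 1 (2 * B' / A)]
  have hρ₀ : 0 < ρ := one_pos.trans_le hρ
  have hBL : B' * L / ρ ≤ A / 2 := by
    have hBL' : 2 * B' / A * L ≤ ρ := hRL.trans' (by gcongr; exact le_max_right _ _)
    rw [div_mul_eq_mul_div, div_le_iff₀ hA] at hBL'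
    rw [div_le_iff₀ hρ₀]
    linarith
  rw [mem_closedBall_zero_iff] at hx
  have hmain' := hmain ρ hρ s₁ hs₁ x (hx.trans (by gcongr; exact min_le_left _ _))
  have herror' := herror ρ hρ₀ s₁ (hJI ⟨hs₁.1, by linarith [hs₁.2]⟩) x
    (hx.trans (by gcongr; exact min_le_right _ _))
  calc A / 2 / ρ = A / ρ - A / 2 / ρ := by ring
    _ ≤ A / ρ - B' * L / ρ / ρ := by gcongr
    _ = A / ρ - 2 * (Real.pi * D + 1) * L * (B / ρ ^ 2) := by ring
    _ ≤ _ := by gcongr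
    _ ≤ _ := sub_le_norm_avgOp_wavePacket hφ hγ hχ hχc hχ₀ hρ' hk hD (by positivity)
      (fun s hs ↦ hξ s (hχI hs)) x

end PacketAverage

section Separated

theorem summable_inv_one_add_mul_int_sq {d : ℝ} (hd : d ≠ 0) :
    Summable fun j : ℤ ↦ (1 + (d * j) ^ 2)⁻¹ := by
  have hsq : Summable fun j : ℤ ↦ (d ^ 2)⁻¹ * (1 / (j : ℝ) ^ 2) :=
    (Real.summable_one_div_int_pow.2 one_lt_two).mul_left _
  refine hsq.of_norm_bounded_eventually ?_
  filter_upwards [Filter.eventually_cofinite_ne (0 : ℤ)] with j hj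
  have hj' : (j : ℝ) ≠ 0 := Int.cast_ne_zero.2 hj
  rw [Real.norm_of_nonneg (by positivity), one_div, ← mul_inv, ← mul_pow]
  exact inv_anti₀ (sq_pos_iff.2 (mul_ne_zero hd hj')) (le_add_of_nonneg_left zero_le_one)

theorem exists_sum_norm_apply_le_of_separated {E F : Type*} [NormedAddCommGroup E] [NormedSpace ℝ E]
    [NormedAddCommGroup F] [NormedSpace ℝ F] (φ : 𝓢(E, F)) {d : ℝ} (hd : 0 < d) :
    ∃ C > 0, ∀ (N : ℕ) (w : Fin N → E), (∀ k l : Fin N, d * |(k : ℝ) - l| ≤ ‖w k - w l‖) →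
      ∑ k, ‖φ (w k)‖ ≤ C := by
  obtain ⟨C, hC, hφ⟩ := exists_norm_apply_le_mul_inv_one_add_pow φ 2
  set G : ℤ → ℝ := fun j ↦ C * (1 + (d / 2 * j) ^ 2)⁻¹
  have hG : Summable G := (summable_inv_one_add_mul_int_sq (half_pos hd).ne').mul_left C
  have hG₀ (j : ℤ) : 0 < G j := by positivity
  refine ⟨∑' j, G j, hG.tsum_pos (fun j ↦ (hG₀ j).le) 0 (hG₀ 0), fun N w hw ↦ ?_⟩
  rcases isEmpty_or_nonempty (Fin N) with hN | hN
  · simpa using tsum_nonneg fun j ↦ (hG₀ j).le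
  obtain ⟨l, hl⟩ := Finite.exists_min fun k ↦ ‖w k‖
  have hterm (k : Fin N) : ‖φ (w k)‖ ≤ G ((k : ℤ) - l) := by
    have hwk : d / 2 * |(k : ℝ) - l| ≤ ‖w k‖ := by
      linarith [hw k l, norm_sub_le (w k) (w l), hl k]
    refine (hφ (w k)).trans ?_
    simp only [G, Int.cast_sub, Int.cast_natCast]
    gcongr
    calc 1 + (d / 2 * ((k : ℝ) - l)) ^ 2 = 1 + (d / 2 * |(k : ℝ) - l|) ^ 2 := by
          rw [mul_pow, mul_pow, sq_abs]
      _ ≤ 1 + ‖w k‖ ^ 2 := by gcongr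
      _ ≤ (1 + ‖w k‖) ^ 2 := by nlinarith [norm_nonneg (w k)]
  have hinj : Function.Injective fun k : Fin N ↦ (k : ℤ) - l := fun k k' h ↦
    Fin.ext (by simpa using h)
  calc ∑ k, ‖φ (w k)‖ ≤ ∑ k : Fin N, G ((k : ℤ) - l) := Finset.sum_le_sum fun k _ ↦ hterm k
    _ = ∑ j ∈ Finset.univ.map ⟨_, hinj⟩, G j := by rw [Finset.sum_map]; rfl
    _ ≤ ∑' j, G j := hG.sum_le_tsum _ fun j _ ↦ (hG₀ j).le

variable {E : Type*} [NormedAddCommGroup E] [InnerProductSpace ℝ E]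

theorem norm_sum_smul_wavePacket_apply_le (φ : 𝓢(E, ℂ)) {ι : Type*} (t : Finset ι) {ρ : ℝ}
    (hρ : ρ ≠ 0) (ξ a : ι → E) {ε : ι → ℂ} (hε : ∀ k, ‖ε k‖ = 1) (x : E) :
    ‖(∑ k ∈ t, ε k • wavePacket φ hρ (ξ k) (a k)) x‖ ≤ ∑ k ∈ t, ‖φ (ρ • (x - a k))‖ := by
  rw [sum_apply]
  refine (norm_sum_le _ _).trans_eq (Finset.sum_congr rfl fun k _ ↦ ?_)
  rw [smul_apply, norm_smul, hε, one_mul, norm_wavePacket_apply]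

variable [FiniteDimensional ℝ E] [MeasurableSpace E] [BorelSpace E]

theorem eLpNorm_one_sum_smul_wavePacket_le (φ : 𝓢(E, ℂ)) {ι : Type*} (t : Finset ι) {ρ : ℝ}
    (hρ : ρ ≠ 0) (ξ a : ι → E) {ε : ι → ℂ} (hε : ∀ k, ‖ε k‖ = 1) :
    eLpNorm (⇑(∑ k ∈ t, ε k • wavePacket φ hρ (ξ k) (a k))) 1 volume ≤
      t.card * (ENNReal.ofReal |(ρ ^ Module.finrank ℝ E)⁻¹| * eLpNorm φ 1 volume) := by
  have hterm (k : ι) : eLpNorm (⇑(ε k • wavePacket φ hρ (ξ k) (a k))) 1 volume =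
      ENNReal.ofReal |(ρ ^ Module.finrank ℝ E)⁻¹| * eLpNorm φ 1 volume := by
    rw [FunLike.coe_smul, eLpNorm_const_smul, ← ofReal_norm, hε, ENNReal.ofReal_one, one_mul,
      eLpNorm_one_wavePacket]
  calc eLpNorm (⇑(∑ k ∈ t, ε k • wavePacket φ hρ (ξ k) (a k))) 1 volume
      ≤ ∑ k ∈ t, eLpNorm (⇑(ε k • wavePacket φ hρ (ξ k) (a k))) 1 volume := by
        rw [FunLike.coe_sum]
        exact eLpNorm_sum_le (fun k _ ↦ (SchwartzMap.continuous _).aestronglyMeasurable) le_rfl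
    _ = _ := by simp only [hterm, Finset.sum_const, nsmul_eq_mul]

theorem exists_eLpNorm_sum_smul_wavePacket_le (φ : 𝓢(E, ℂ)) {d : ℝ} (hd : 0 < d) {p : ℝ≥0∞}
    (hp : 1 ≤ p) :
    ∃ K > 0, ∀ ρ (hρ : 0 < ρ) (N : ℕ) (ξ a : Fin N → E) (ε : Fin N → ℂ), (∀ k, ‖ε k‖ = 1) →
      (∀ k l : Fin N, d * |(k : ℝ) - l| ≤ ρ * ‖a k - a l‖) →
      eLpNorm (⇑(∑ k, ε k • wavePacket φ hρ.ne' (ξ k) (a k))) p volume ≤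
        ENNReal.ofReal (K * (N * (ρ ^ Module.finrank ℝ E)⁻¹) ^ (1 / p).toReal) := by
  obtain ⟨C, hC, hsum⟩ := exists_sum_norm_apply_le_of_separated φ hd
  set Φ : ℝ := (eLpNorm φ 1 volume).toReal + 1
  have hΦ : eLpNorm φ 1 volume ≤ ENNReal.ofReal Φ := by
    rw [← ENNReal.ofReal_toReal (φ.memLp 1 volume).eLpNorm_ne_top]
    exact ENNReal.ofReal_le_ofReal (le_add_of_nonneg_right zero_le_one)
  set q : ℝ := (1 / p).toReal
  have hq : q ≤ 1 := ENNReal.toReal_le_of_le_ofReal zero_le_one (by simpa using hp)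
  refine ⟨C ^ (1 - q) * Φ ^ q, by positivity, fun ρ hρ N ξ a ε hε hsep ↦ ?_⟩
  set f := ∑ k, ε k • wavePacket φ hρ.ne' (ξ k) (a k)
  have htop : eLpNorm f ∞ volume ≤ ENNReal.ofReal C := by
    rw [eLpNorm_exponent_top]
    refine eLpNormEssSup_le_of_ae_bound (.of_forall fun x ↦
      (norm_sum_smul_wavePacket_apply_le φ _ hρ.ne' ξ a hε x).trans (hsum N _ fun k l ↦ ?_))
    rw [← smul_sub, sub_sub_sub_cancel_left, norm_smul, Real.norm_of_nonneg hρ.le, norm_sub_rev]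
    exact hsep k l
  have hone : eLpNorm f 1 volume ≤
      ENNReal.ofReal (Φ * (N * (ρ ^ Module.finrank ℝ E)⁻¹)) := by
    refine (eLpNorm_one_sum_smul_wavePacket_le φ _ hρ.ne' ξ a hε).trans ?_
    rw [Finset.card_fin, abs_of_pos (by positivity), mul_comm Φ,
      ENNReal.ofReal_mul (by positivity), ENNReal.ofReal_mul (by positivity),
      ENNReal.ofReal_natCast, mul_assoc]
    gcongr
  calc eLpNorm f p volume ≤ eLpNorm f ∞ volume ^ (1 - q) * eLpNorm f 1 volume ^ q :=
        eLpNorm_le_eLpNorm_top_rpow_mul_eLpNorm_one_rpow f.continuous.aestronglyMeasurable hp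
    _ ≤ ENNReal.ofReal C ^ (1 - q) *
        ENNReal.ofReal (Φ * (N * (ρ ^ Module.finrank ℝ E)⁻¹)) ^ q := by
      gcongr
    _ = _ := by
      rw [ENNReal.ofReal_rpow_of_pos hC, ENNReal.ofReal_rpow_of_nonneg (by positivity)
        ENNReal.toReal_nonneg, ← ENNReal.ofReal_mul (by positivity),
        Real.mul_rpow (by positivity) (by positivity), mul_assoc]

end Separated

section HighFrequency

theorem wavePacket_mem_bandLimited_annulus {E : Type*} [NormedAddCommGroup E]
    [InnerProductSpace ℝ E] [FiniteDimensional ℝ E] [MeasurableSpace E] [BorelSpace E] {φ : 𝓢(E, ℂ)}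
    (hφ : IsWaveProfile φ) {ρ r R : ℝ} (hρ : 0 < ρ) {ξ₀ : E} (hr : r + ρ ≤ ‖ξ₀‖)
    (hR : ‖ξ₀‖ + ρ ≤ R) (a : E) :
    wavePacket φ hρ.ne' ξ₀ a ∈ bandLimited {ξ : E | r ≤ ‖ξ‖ ∧ ‖ξ‖ ≤ R} := by
  refine fun ξ hξ ↦ fourier_wavePacket_eq_zero hφ hρ ξ₀ a (not_lt.1 fun hlt ↦ hξ ?_)
  obtain ⟨hlower, hupper⟩ := abs_le.1 ((abs_norm_sub_norm_le ξ ξ₀).trans hlt.le)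
  exact ⟨by linarith, by linarith⟩

variable {n : ℕ} {γ : ℝ → Euc n} {χ : ℝ → ℝ} {φ : 𝓢(Euc n, ℂ)} {p : ℝ≥0∞}

theorem ne_zero_of_eLpNorm_avgOp_ne_zero {f : 𝓢(Euc n, ℂ)}
    (hf : eLpNorm (avgOp γ χ f) p volume ≠ 0) : f ≠ 0 := by
  rintro rfl
  refine hf ?_
  have hzero : avgOp γ χ ⇑(0 : 𝓢(Euc n, ℂ)) = 0 := by ext x; simp [avgOp]
  rw [hzero, eLpNorm_zero]

theorem exists_norm_eq_one_le_eLpNorm_avgOp_sum (hγ : Continuous γ) (hχ : Integrable χ) (hp : 2 ≤ p)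
    {ι : Type*} (t : Finset ι) (f : ι → 𝓢(Euc n, ℂ)) {A r : ℝ} (hA : 0 ≤ A) (hr : 0 < r)
    (hf : ∀ k, ∀ x ∈ Metric.closedBall 0 r, A ≤ ‖avgOp γ χ (f k) x‖) :
    ∃ ε : ι → ℂ, (∀ k, ‖ε k‖ = 1) ∧
      ENNReal.ofReal (A * (t.card : ℝ) ^ (1 / 2 : ℝ) *
        volume.real (Metric.closedBall (0 : Euc n) r) ^ (1 / p).toReal) ≤
        eLpNorm (avgOp γ χ ⇑(∑ k ∈ t, ε k • f k)) p volume := by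
  have hfin : volume (Metric.closedBall (0 : Euc n) r) ≠ ∞ := measure_closedBall_lt_top.ne
  have : Fact (volume (Metric.closedBall (0 : Euc n) r) < ∞) := ⟨hfin.lt_top⟩
  obtain ⟨ε, hε, hle⟩ := exists_norm_eq_one_mul_sqrt_card_le_eLpNorm_sum ℂ
    (h := fun k ↦ avgOp γ χ (f k)) (A := ENNReal.ofReal A) measurableSet_closedBall
    (Metric.measure_closedBall_pos volume 0 hr).ne' hfin (fun k ↦ memLp_avgOp hγ hχ (f k) 2)
    (fun k x hx ↦ by rw [← ofReal_norm]; exact ENNReal.ofReal_le_ofReal (hf k x hx)) t hp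
  refine ⟨ε, hε, ?_⟩
  rw [avgOp_sum_smul hγ hχ]
  refine hle.trans_eq' ?_
  rw [ENNReal.ofReal_mul (by positivity), ENNReal.ofReal_mul hA,
    ← ENNReal.ofReal_rpow_of_nonneg (by positivity) (by positivity), ENNReal.ofReal_natCast,
    ← ENNReal.ofReal_rpow_of_nonneg (by positivity) (by positivity),
    ofReal_measureReal hfin]

theorem hasLowerBoundAt_of_wavePackets (hφ : IsWaveProfile φ) (hγ : Continuous γ)
    (hχ : Integrable χ) (hp : 2 ≤ p) {N : ℕ} {ρ lam A r B c : ℝ} (hN : 0 < N) (hρ : 0 < ρ)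
    (hρlam : ρ ≤ lam / 2) (hA : 0 < A) (hr : 0 < r) {ξ a : Fin N → Euc n}
    (hξ : ∀ k, ‖ξ k‖ = lam)
    (hlower : ∀ k, ∀ x ∈ Metric.closedBall 0 r,
      A ≤ ‖avgOp γ χ (wavePacket φ hρ.ne' (ξ k) (a k)) x‖)
    (hupper : ∀ ε : Fin N → ℂ, (∀ k, ‖ε k‖ = 1) →
      eLpNorm (⇑(∑ k, ε k • wavePacket φ hρ.ne' (ξ k) (a k))) p volume ≤ ENNReal.ofReal B)
    (hc : 0 ≤ c) (hcB : c * B ≤ A * (N : ℝ) ^ (1 / 2 : ℝ) *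
      volume.real (Metric.closedBall (0 : Euc n) r) ^ (1 / p).toReal) :
    HasLowerBoundAt γ χ p lam c := by
  obtain ⟨ε, hε, hle⟩ := exists_norm_eq_one_le_eLpNorm_avgOp_sum hγ hχ hp Finset.univ
    (fun k ↦ wavePacket φ hρ.ne' (ξ k) (a k)) hA.le hr hlower
  rw [Finset.card_fin] at hle
  have hvol : 0 < volume.real (Metric.closedBall (0 : Euc n) r) :=
    ENNReal.toReal_pos (Metric.measure_closedBall_pos volume 0 hr).ne'
      measure_closedBall_lt_top.ne
  refine ⟨∑ k, ε k • wavePacket φ hρ.ne' (ξ k) (a k), ne_zero_of_eLpNorm_avgOp_ne_zero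
    (γ := γ) (χ := χ) (p := p) ?_, ?_, ?_⟩
  · exact (hle.trans_lt' (ENNReal.ofReal_pos.2 (by positivity))).ne'
  · refine tsupport_fourier_subset_of_mem_bandLimited (isClosed_annulus _ _)
      (Submodule.sum_mem _ fun k _ ↦ Submodule.smul_mem _ _ ?_)
    exact wavePacket_mem_bandLimited_annulus hφ hρ (by linarith [hξ k]) (by linarith [hξ k]) _
  · calc ENNReal.ofReal c * _ ≤ ENNReal.ofReal c * ENNReal.ofReal B := by
          gcongr
          exact hupper ε hε
      _ = ENNReal.ofReal (c * B) := (ENNReal.ofReal_mul hc).symm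
      _ ≤ _ := (ENNReal.ofReal_le_ofReal hcB).trans hle

theorem exists_Icc_forall_le_of_continuous (hχ : Continuous χ) (hχ₀ : ∀ s, 0 ≤ χ s) (hχne : χ ≠ 0) :
    ∃ s₀, ∃ η > 0, ∃ m > 0, ∀ s ∈ Icc s₀ (s₀ + 2 * η), m ≤ χ s := by
  obtain ⟨s₀, hs₀⟩ := Function.ne_iff.1 hχne
  have hpos : 0 < χ s₀ := (hχ₀ s₀).lt_of_ne' hs₀
  obtain ⟨δ, hδ, hball⟩ := Metric.eventually_nhds_iff.1
    (hχ.continuousAt.eventually (lt_mem_nhds (half_lt_self hpos)))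
  refine ⟨s₀, δ / 4, by positivity, χ s₀ / 2, by positivity, fun s hs ↦ (hball ?_).le⟩
  rw [Real.dist_eq, abs_of_nonneg (by linarith [hs.1])]
  linarith [hs.2]

theorem exists_fin_points_mem_Icc_separated (s₀ : ℝ) {η L : ℝ} (hη : 0 ≤ η) (hL : 1 ≤ L) :
    ∃ N : ℕ, L ≤ N ∧ ∃ s : Fin N → ℝ, (∀ k, s k ∈ Icc s₀ (s₀ + η)) ∧
      ∀ k l : Fin N, η / 2 * |(k : ℝ) - l| ≤ L * |s k - s l| := by
  have hLN : L ≤ ⌈L⌉₊ := Nat.le_ceil L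
  have hN : (0 : ℝ) < ⌈L⌉₊ := by linarith
  have hN₂ : (⌈L⌉₊ : ℝ) ≤ 2 * L := by linarith [Nat.ceil_lt_add_one (one_pos.trans_le hL).le]
  refine ⟨⌈L⌉₊, hLN, fun k ↦ s₀ + η * (k / ⌈L⌉₊), fun k ↦ ⟨?_, ?_⟩, fun k l ↦ ?_⟩
  · exact le_add_of_nonneg_right (by positivity)
  · have hk : (k : ℝ) / ⌈L⌉₊ ≤ 1 := (div_le_one hN).2 (Nat.cast_le.2 k.2.le)
    linarith [mul_le_of_le_one_right hη hk]
  · calc η / 2 * |(k : ℝ) - l| = L * (η * |(k : ℝ) - l| / (2 * L)) := by field_simp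
      _ ≤ L * (η * |(k : ℝ) - l| / ⌈L⌉₊) := by gcongr
      _ = L * |s₀ + η * (k / ⌈L⌉₊) - (s₀ + η * (l / ⌈L⌉₊))| := by
        rw [add_sub_add_left_eq_sub, ← mul_sub, ← sub_div, abs_mul, abs_div, abs_of_nonneg hη,
          abs_of_pos hN, mul_div_assoc]

theorem abs_inner_pow_smul_le {E : Type*} [NormedAddCommGroup E] [InnerProductSpace ℝ E]
    {e v : E} {D L τ : ℝ} {k : ℕ} (hL : 0 ≤ L) (h : |⟪e, v⟫| ≤ D * τ ^ k) :
    |⟪L ^ k • e, v⟫| ≤ D * (L * τ) ^ k :=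
  calc |⟪L ^ k • e, v⟫| = L ^ k * |⟪e, v⟫| := by
        rw [real_inner_smul_left, abs_mul, abs_of_nonneg (by positivity)]
    _ ≤ L ^ k * (D * τ ^ k) := by gcongr
    _ = D * (L * τ) ^ k := by ring

theorem exists_wavePackets_le_norm_avgOp (hφ : IsWaveProfile φ) (hn : n ≠ 0) {a b : ℝ}
    (hγ : ContDiff ℝ n γ) (hinj : InjOn γ (Icc a b)) (hreg : ∀ s ∈ Icc a b, deriv γ s ≠ 0)
    (hχ : Continuous χ) (hχI : Function.support χ ⊆ Icc a b) (hχ₀ : ∀ s, 0 ≤ χ s)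
    (hχne : χ ≠ 0) :
    ∃ A > 0, ∃ r > 0, ∃ R ≥ (1 : ℝ), ∃ d > 0, ∀ L ≥ 1, ∀ (ρ : ℝ) (hρ : ρ ≠ 0), ρ = R * L →
      ∃ N : ℕ, L ≤ N ∧ ∃ (s : Fin N → ℝ) (e : Fin N → Euc n), (∀ k, ‖e k‖ = 1) ∧
        (∀ k l : Fin N, d * |(k : ℝ) - l| ≤ ρ * ‖γ (s k) - γ (s l)‖) ∧
        ∀ k, ∀ x ∈ Metric.closedBall 0 (r / ρ),
          A / ρ ≤ ‖avgOp γ χ (wavePacket φ hρ (L ^ n • e k) (-γ (s k))) x‖ := by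
  have hγ₁ : ContDiff ℝ 1 γ := hγ.of_le (by exact_mod_cast Nat.one_le_iff_ne_zero.2 hn)
  have hχc : HasCompactSupport χ := .intro isCompact_Icc fun s hs ↦
    Function.notMem_support.1 fun h ↦ hs (hχI h)
  obtain ⟨s₀, η, hη, m, hm, hχm⟩ := exists_Icc_forall_le_of_continuous hχ hχ₀ hχne
  obtain ⟨c, hc, hsep⟩ := exists_mul_abs_sub_le_norm_sub hγ₁ isCompact_Icc hinj hreg
  obtain ⟨K, hK⟩ := hγ₁.contDiffOn.exists_lipschitzOnWith one_ne_zero (convex_Icc a b)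
    isCompact_Icc
  obtain ⟨D, hD, hphase⟩ := exists_norm_eq_one_abs_inner_sub_le hn (by simp) hγ a b
  obtain ⟨A, hA, r, hr, R, hR, hlow⟩ := exists_div_le_norm_avgOp_wavePacket hφ hγ.continuous hχ
    hχc hχ₀ hη hm hχm hχI hK hc hsep hn hD
  refine ⟨A, hA, r, hr, R, hR, c * (η / 2), by positivity, fun L hL ρ hρ hρR ↦ ?_⟩
  have hL₀ : 0 ≤ L := zero_le_one.trans hL
  obtain ⟨N, hLN, s, hs, hsepN⟩ := exists_fin_points_mem_Icc_separated s₀ hη.le hL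
  have hsI (k : Fin N) : s k ∈ Icc a b :=
    hχI (hm.trans_le (hχm _ ⟨(hs k).1, by linarith [(hs k).2]⟩)).ne'
  choose e he hflat using fun k ↦ hphase (s k) (hsI k)
  refine ⟨N, hLN, s, e, he, fun k l ↦ ?_, fun k ↦ hlow L hL ρ hρ hρR.ge (s k) (hs k) _ fun t ht ↦
    abs_inner_pow_smul_le hL₀ (hflat k t ht)⟩
  calc c * (η / 2) * |(k : ℝ) - l| = c * (η / 2 * |(k : ℝ) - l|) := mul_assoc _ _ _
    _ ≤ c * (L * |s k - s l|) := mul_le_mul_of_nonneg_left (hsepN k l) hc.le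
    _ = L * (c * |s k - s l|) := by ring
    _ ≤ ρ * ‖γ (s k) - γ (s l)‖ :=
      mul_le_mul (hρR ▸ le_mul_of_one_le_left hL₀ hR) (hsep _ (hsI k) _ (hsI l))
        (by positivity) (hρR ▸ by positivity)

theorem rpow_balance {A R W K q u L N : ℝ} (hA : 0 < A) (hR : 0 < R) (hW : 0 < W) (hK : 0 < K)
    (hq : q ≤ 1 / 2) (hu : 0 < u) (hL : 0 < L) (hN : L ≤ N) :
    A / R * W ^ q / K * L ^ (-(1 / 2 + q)) * (K * (N * u) ^ q) ≤
      A / (R * L) * N ^ (1 / 2 : ℝ) * (u * W) ^ q := by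
  have hN₀ : 0 < N := hL.trans_le hN
  have hNhalf : N ^ (1 / 2 : ℝ) = N ^ (1 / 2 - q) * N ^ q := by
    rw [← Real.rpow_add hN₀, sub_add_cancel]
  have hLneg : L ^ (-(1 / 2 + q)) = L ^ (1 / 2 - q) / L := by
    rw [← Real.rpow_sub_one hL.ne']
    ring_nf
  rw [Real.mul_rpow hN₀.le hu.le, Real.mul_rpow hu.le hW.le, hNhalf, hLneg]
  calc _ = A / (R * L) * (L ^ (1 / 2 - q) * N ^ q) * (u ^ q * W ^ q) := by field_simp
    _ ≤ _ := by
      gcongr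

theorem exists_hasLowerBoundAt_pow_of_large (hn : 2 ≤ n) (hp : 2 ≤ p) {a b : ℝ}
    (hγ : ContDiff ℝ n γ) (hinj : InjOn γ (Icc a b)) (hreg : ∀ s ∈ Icc a b, deriv γ s ≠ 0)
    (hχ : Continuous χ) (hχI : Function.support χ ⊆ Icc a b) (hχ₀ : ∀ s, 0 ≤ χ s)
    (hχne : χ ≠ 0) :
    ∃ c > 0, ∃ L₀ > 0, ∀ L ≥ L₀,
      HasLowerBoundAt γ χ p (L ^ n) (c * L ^ (-(1 / 2 + (1 / p).toReal))) := by
  obtain ⟨φ, hφ⟩ := exists_isWaveProfile (E := Euc n)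
  obtain ⟨A, hA, r, hr, R, hR, d, hd, hpackets⟩ := exists_wavePackets_le_norm_avgOp hφ (by lia)
    hγ hinj hreg hχ hχI hχ₀ hχne
  obtain ⟨K, hK, hupper⟩ := exists_eLpNorm_sum_smul_wavePacket_le φ hd (one_le_two.trans hp)
  have hχint : Integrable χ := hχ.integrable_of_hasCompactSupport
    (.intro isCompact_Icc fun s hs ↦ Function.notMem_support.1 fun h ↦ hs (hχI h))
  set q : ℝ := (1 / p).toReal
  have hq : q ≤ 1 / 2 := ENNReal.toReal_le_of_le_ofReal (by norm_num) (by
    simpa [ENNReal.ofReal_inv_of_pos] using hp)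
  set V : ℝ := volume.real (Metric.ball (0 : Euc n) 1)
  have hV : 0 < V := ENNReal.toReal_pos (Metric.measure_ball_pos volume 0 one_pos).ne'
    measure_ball_lt_top.ne
  refine ⟨A / R * (r ^ n * V) ^ q / K, by positivity, 2 * R, by positivity, fun L hL ↦ ?_⟩
  have hL₁ : 1 ≤ L := by linarith
  have hL₀ : 0 < L := by linarith
  have hρ : 0 < R * L := by positivity
  have hρlam : R * L ≤ L ^ n / 2 := by nlinarith [pow_le_pow_right₀ hL₁ hn]
  obtain ⟨N, hLN, s, e, he, hsep, hlower⟩ := hpackets L hL₁ (R * L) hρ.ne' rfl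
  have hN : 0 < N := Nat.cast_pos.1 (hL₀.trans_le hLN)
  have hball : volume.real (Metric.closedBall (0 : Euc n) (r / (R * L))) =
      ((R * L) ^ n)⁻¹ * (r ^ n * V) := by
    rw [Measure.addHaar_real_closedBall volume 0 (by positivity), finrank_euclideanSpace_fin,
      div_pow, div_eq_inv_mul, mul_assoc]
  have hupper' (ε : Fin N → ℂ) (hε : ∀ k, ‖ε k‖ = 1) := hupper (R * L) hρ N (fun k ↦ L ^ n • e k)
    (fun k ↦ -γ (s k)) ε hε fun k l ↦ by rw [neg_sub_neg, norm_sub_rev]; exact hsep k l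
  refine hasLowerBoundAt_of_wavePackets hφ hγ.continuous hχint hp hN hρ hρlam (by positivity)
    (by positivity) (fun k ↦ ?_) hlower hupper' (by positivity) ?_
  · rw [norm_smul, he, mul_one, Real.norm_of_nonneg (by positivity)]
  · rw [hball, finrank_euclideanSpace_fin]
    exact rpow_balance hA (by positivity) (by positivity) hK hq (by positivity) hL₀ hLN

theorem exists_hasLowerBoundAt_of_large (hn : 2 ≤ n) (hp : 2 ≤ p) {a b : ℝ}
    (hγ : ContDiff ℝ n γ) (hinj : InjOn γ (Icc a b)) (hreg : ∀ s ∈ Icc a b, deriv γ s ≠ 0)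
    (hχ : Continuous χ) (hχI : Function.support χ ⊆ Icc a b) (hχ₀ : ∀ s, 0 ≤ χ s)
    (hχne : χ ≠ 0) :
    ∃ c > 0, ∃ Λ, ∀ lam ≥ Λ, HasLowerBoundAt γ χ p lam
      (c * lam ^ (-((1 / (n : ℝ)) * (1 / 2 + (1 / p).toReal)))) := by
  obtain ⟨c, hc, L₀, hL₀, hbound⟩ := exists_hasLowerBoundAt_pow_of_large hn hp hγ hinj hreg hχ hχI
    hχ₀ hχne
  refine ⟨c, hc, L₀ ^ n, fun lam hlam ↦ ?_⟩
  have hn₀ : n ≠ 0 := by lia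
  have hlam₀ : 0 ≤ lam := hlam.trans' (by positivity)
  have hL : L₀ ≤ lam ^ (n⁻¹ : ℝ) := by
    rw [← Real.pow_rpow_inv_natCast hL₀.le hn₀]
    gcongr
  have h := hbound _ hL
  rwa [Real.rpow_inv_natCast_pow hlam₀ hn₀, ← Real.rpow_mul hlam₀, ← one_div, mul_neg] at h

end HighFrequency

section BoundedFrequency

theorem exists_complexMGF_mul_I_ne_zero {Ω : Type*} [MeasurableSpace Ω] {μ : Measure Ω} [NeZero μ]
    {X : Ω → ℝ} (hX : ProbabilityTheory.integrableExpSet X μ = univ) {t₁ t₂ : ℝ} (ht : t₁ < t₂) :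
    ∃ t ∈ Ioo t₁ t₂, ProbabilityTheory.complexMGF X μ (t * Complex.I) ≠ 0 := by
  by_contra! hzero
  have hanalytic : AnalyticOnNhd ℝ
      (fun t : ℝ ↦ ProbabilityTheory.complexMGF X μ (t * Complex.I)) univ := by
    have hmgf := ProbabilityTheory.analyticOnNhd_complexMGF (X := X) (μ := μ)
    rw [hX, interior_univ] at hmgf
    exact fun t _ ↦ (hmgf _ (mem_univ _)).restrictScalars.fun_comp
      ((Complex.ofRealCLM.analyticAt t).mul analyticAt_const)
  obtain ⟨t, ht₁, ht₂⟩ := exists_between ht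
  have heq := hanalytic.eq_of_eventuallyEq analyticOnNhd_const (z₀ := t)
    (Filter.eventually_of_mem (Ioo_mem_nhds ht₁ ht₂) hzero)
  have hint : Integrable (fun _ ↦ (1 : ℝ)) μ := by
    simpa [ProbabilityTheory.integrableExpSet] using hX.ge (mem_univ 0)
  have := (integrable_const_iff_isFiniteMeasure one_ne_zero).1 hint
  simpa [ProbabilityTheory.complexMGF, measureReal_eq_zero_iff, NeZero.ne μ] using congrFun heq 0

theorem exists_integral_fourierChar_mul_ne_zero {X χ : ℝ → ℝ} (hX : Continuous X)
    (hχ : Continuous χ) (hχc : HasCompactSupport χ) (hχ₀ : ∀ s, 0 ≤ χ s) (hχne : χ ≠ 0)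
    {t₁ t₂ : ℝ} (ht : t₁ < t₂) :
    ∃ t ∈ Ioo t₁ t₂, ∫ s, (𝐞 (t * X s) : ℂ) * (χ s : ℂ) ≠ 0 := by
  set μ : Measure ℝ := volume.withDensity fun s ↦ ENNReal.ofReal (χ s)
  have hdens : Measurable fun s ↦ ENNReal.ofReal (χ s) := hχ.measurable.ennreal_ofReal
  have hdens_top : ∀ᵐ s, ENNReal.ofReal (χ s) < ∞ := .of_forall fun s ↦ ENNReal.ofReal_lt_top
  have : NeZero μ := ⟨fun hμ ↦ hχne <| (hχ.ae_eq_iff_eq volume continuous_const).1 <| by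
    filter_upwards [(withDensity_eq_zero_iff hdens.aemeasurable).1 hμ] with s hs
    exact (ENNReal.ofReal_eq_zero.1 hs).antisymm (hχ₀ s)⟩
  have hexp : ProbabilityTheory.integrableExpSet (fun s ↦ 2 * Real.pi * X s) μ = univ := by
    refine eq_univ_of_forall fun t ↦ (integrable_withDensity_iff_integrable_smul' hdens
      hdens_top).2 (Continuous.integrable_of_hasCompactSupport ?_ ?_)
    · simp only [ENNReal.toReal_ofReal (hχ₀ _)]
      fun_prop
    · simp only [ENNReal.toReal_ofReal (hχ₀ _)]
      exact hχc.smul_right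
  obtain ⟨t, htmem, hne⟩ := exists_complexMGF_mul_I_ne_zero hexp ht
  refine ⟨t, htmem, ?_⟩
  rw [ProbabilityTheory.complexMGF,
    integral_withDensity_eq_integral_toReal_smul hdens hdens_top] at hne
  refine ne_of_eq_of_ne (integral_congr_ae (.of_forall fun s ↦ ?_)) hne
  simp only [ENNReal.toReal_ofReal (hχ₀ s), Complex.real_smul, mul_comm, Real.fourierChar_apply]
  push_cast
  ring_nf

theorem exists_pos_ofReal_mul_le {x y : ℝ≥0∞} (hx : x ≠ ∞) (hy : y ≠ 0) :
    ∃ c > 0, ENNReal.ofReal c * x ≤ y := by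
  obtain ⟨c, hc, hcx⟩ := ENNReal.exists_nnreal_pos_mul_lt hx hy
  exact ⟨c, hc, by rw [ENNReal.ofReal_coe_nnreal]; exact hcx.le⟩

variable {n : ℕ} {γ : ℝ → Euc n} {χ : ℝ → ℝ} {p : ℝ≥0∞}

theorem avgOp_wavePacket_zero_apply_zero (φ : 𝓢(Euc n, ℂ)) {ρ : ℝ} (hρ : ρ ≠ 0) (ξ : Euc n) :
    avgOp γ χ (wavePacket φ hρ ξ 0) 0 =
      ∫ s, (𝐞 ⟪ξ, -γ s⟫ : ℂ) * (χ s : ℂ) * φ (ρ • -γ s) := by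
  refine integral_congr_ae (.of_forall fun s ↦ ?_)
  simp only [wavePacket_apply, zero_sub, sub_zero, Circle.smul_def, smul_eq_mul]
  ring

theorem exists_avgOp_wavePacket_apply_zero_ne_zero {φ : 𝓢(Euc n, ℂ)} (hφ : φ 0 ≠ 0)
    (hγ : Continuous γ) (hχ : Integrable χ) {ξ : Euc n}
    (hξ : ∫ s, (𝐞 ⟪ξ, -γ s⟫ : ℂ) * (χ s : ℂ) ≠ 0) {δ : ℝ} (hδ : 0 < δ) :
    ∃ ρ, ∃ hρ : 0 < ρ, ρ < δ ∧ avgOp γ χ (wavePacket φ hρ.ne' ξ 0) 0 ≠ 0 := by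
  obtain ⟨C, hC⟩ := exists_norm_apply_le φ
  have hφc := φ.continuous
  have hchar : Continuous fun s ↦ (𝐞 ⟪ξ, -γ s⟫ : ℂ) :=
    continuous_subtype_val.comp (Real.continuous_fourierChar.comp (by fun_prop))
  have hcont : Continuous fun ρ : ℝ ↦ ∫ s, (𝐞 ⟪ξ, -γ s⟫ : ℂ) * (χ s : ℂ) * φ (ρ • -γ s) := by
    refine continuous_of_dominated (bound := fun s ↦ ‖χ s‖ * C) (fun ρ ↦ ?_)
      (fun ρ ↦ .of_forall fun s ↦ ?_) (hχ.norm.mul_const C) (.of_forall fun s ↦ by fun_prop)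
    · exact (hchar.aestronglyMeasurable.mul hχ.ofReal.aestronglyMeasurable).mul
        (Continuous.aestronglyMeasurable (by fun_prop))
    · rw [norm_mul, norm_mul, Circle.norm_coe, one_mul, Complex.norm_real]
      gcongr
      exact hC _
  have hne : (∫ s, (𝐞 ⟪ξ, -γ s⟫ : ℂ) * (χ s : ℂ) * φ ((0 : ℝ) • -γ s)) ≠ 0 := by
    simpa only [zero_smul, integral_mul_const] using mul_ne_zero hξ hφ
  obtain ⟨ρ, hne, hρ⟩ := (((hcont.continuousAt.eventually_ne hne).filter_mono
    nhdsWithin_le_nhds).and (Ioo_mem_nhdsGT hδ)).exists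
  exact ⟨ρ, hρ.1, hρ.2, by rwa [avgOp_wavePacket_zero_apply_zero]⟩

theorem eLpNorm_avgOp_ne_zero (hγ : Continuous γ) (hχ : Integrable χ) (hp : p ≠ 0)
    {f : 𝓢(Euc n, ℂ)} {x : Euc n} (hx : avgOp γ χ f x ≠ 0) :
    eLpNorm (avgOp γ χ f) p volume ≠ 0 := by
  obtain ⟨C, hC⟩ := exists_norm_apply_le f
  have hcont := continuous_avgOp hγ hχ f.continuous hC
  rw [Ne, eLpNorm_eq_zero_iff hcont.aestronglyMeasurable hp]
  exact fun h ↦ hx (congrFun ((hcont.ae_eq_iff_eq volume continuous_const).1 h) x)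

theorem exists_eventually_hasLowerBoundAt (hn : n ≠ 0) (hp : p ≠ 0) (hγ : Continuous γ)
    (hχ : Continuous χ) (hχc : HasCompactSupport χ) (hχ₀ : ∀ s, 0 ≤ χ s) (hχne : χ ≠ 0) {l : ℝ}
    (hl : 0 < l) : ∃ c > 0, ∀ᶠ lam in 𝓝 l, HasLowerBoundAt γ χ p lam c := by
  have hχint := hχ.integrable_of_hasCompactSupport hχc (μ := volume)
  have : NeZero n := ⟨hn⟩
  obtain ⟨w, hw⟩ := exists_norm_eq (Euc n) zero_le_one
  obtain ⟨t, ht, hne⟩ := exists_integral_fourierChar_mul_ne_zero (X := fun s ↦ ⟪w, -γ s⟫)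
    (by fun_prop) hχ hχc hχ₀ hχne (show 3 / 4 * l < 3 / 2 * l by linarith)
  simp only [← real_inner_smul_left] at hne
  have hnorm : ‖t • w‖ = t := by
    rw [norm_smul, hw, mul_one, Real.norm_of_nonneg (by linarith [ht.1])]
  obtain ⟨φ, hφ⟩ := exists_isWaveProfile (E := Euc n)
  obtain ⟨ρ, hρ, hρl, hne⟩ := exists_avgOp_wavePacket_apply_zero_ne_zero hφ.apply_zero_ne_zero hγ
    hχint hne (show 0 < l / 8 by positivity)
  have hLp := eLpNorm_avgOp_ne_zero hγ hχint hp hne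
  obtain ⟨c, hc, hle⟩ := exists_pos_ofReal_mul_le
    ((wavePacket φ hρ.ne' (t • w) 0).memLp p volume).eLpNorm_ne_top hLp
  refine ⟨c, hc, ?_⟩
  filter_upwards [Ioo_mem_nhds (show 13 / 16 * l < l by linarith)
    (show l < 5 / 4 * l by linarith)] with lam hlam
  refine ⟨_, ne_zero_of_eLpNorm_avgOp_ne_zero hLp, tsupport_fourier_subset_of_mem_bandLimited
    (isClosed_annulus _ _) (wavePacket_mem_bandLimited_annulus hφ hρ ?_ ?_ 0), hle⟩
  · linarith [ht.1, hlam.2]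
  · linarith [ht.2, hlam.1]

theorem exists_forall_mem_Icc_hasLowerBoundAt (hn : n ≠ 0) (hp : p ≠ 0) (hγ : Continuous γ)
    (hχ : Continuous χ) (hχc : HasCompactSupport χ) (hχ₀ : ∀ s, 0 ≤ χ s) (hχne : χ ≠ 0)
    {l : ℝ} (hl : 0 < l) (Λ : ℝ) :
    ∃ c > 0, ∀ lam ∈ Icc l Λ, HasLowerBoundAt γ χ p lam c :=
  exists_pos_forall_mem_of_isCompact isCompact_Icc (fun _ _ _ ↦ HasLowerBoundAt.mono)
    fun lam hlam ↦ by
      obtain ⟨c, hc, hev⟩ := exists_eventually_hasLowerBoundAt hn hp hγ hχ hχc hχ₀ hχne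
        (hl.trans_le hlam.1)
      exact ⟨c, hc, hev.filter_mono nhdsWithin_le_nhds⟩

end BoundedFrequency

theorem statement6_general {n : ℕ} (hn : 2 ≤ n) {p : ℝ≥0∞} (hp : 2 ≤ p) {a b : ℝ} {γ : ℝ → Euc n}
    (hγ : ContDiff ℝ n γ) (hinj : InjOn γ (Icc a b)) (hreg : ∀ s ∈ Icc a b, deriv γ s ≠ 0)
    {χ : ℝ → ℝ} (hχ : Continuous χ) (hχI : Function.support χ ⊆ Icc a b) (hχ₀ : ∀ s, 0 ≤ χ s)
    (hχne : χ ≠ 0) :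
    ∃ c : ℝ, 0 < c ∧ ∀ lam : ℝ, 1 ≤ lam →
      ∃ f : SchwartzMap (Euc n) ℂ, f ≠ 0 ∧
        tsupport (𝓕 ⇑f) ⊆ {ξ : Euc n | lam / 2 ≤ ‖ξ‖ ∧ ‖ξ‖ ≤ 2 * lam} ∧
        ENNReal.ofReal (c * lam ^ (-((1 / (n : ℝ)) * (1 / 2 + (1 / p).toReal)))) *
            eLpNorm (⇑f) p volume ≤
          eLpNorm (avgOp γ χ ⇑f) p volume := by
  have hχc : HasCompactSupport χ := .intro isCompact_Icc fun s hs ↦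
    Function.notMem_support.1 fun h ↦ hs (hχI h)
  obtain ⟨c, hc, Λ, hlarge⟩ := exists_hasLowerBoundAt_of_large hn hp hγ hinj hreg hχ hχI hχ₀ hχne
  obtain ⟨d, hd, hbounded⟩ := exists_forall_mem_Icc_hasLowerBoundAt (by lia)
    (two_pos.trans_le hp).ne' hγ.continuous hχ hχc hχ₀ hχne one_pos Λ
  refine ⟨min c d, lt_min hc hd, fun lam hlam ↦ ?_⟩
  have hlam₀ : 0 ≤ lam := zero_le_one.trans hlam
  rcases le_total Λ lam with hΛ | hΛ
  · exact (hlarge lam hΛ).mono (mul_le_mul_of_nonneg_right (min_le_left c d)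
      (Real.rpow_nonneg hlam₀ _))
  · refine (hbounded lam ⟨hlam, hΛ⟩).mono ?_
    have hpow : lam ^ (-((1 / (n : ℝ)) * (1 / 2 + (1 / p).toReal))) ≤ 1 :=
      Real.rpow_le_one_of_one_le_of_nonpos hlam (neg_nonpos.2 (by positivity))
    exact (mul_le_of_le_one_right (by positivity) hpow).trans (min_le_right c d)

/-- lower bound `sup{‖A_γ f‖_p : f ∈ Z_λ} ≳ λ^{−(1/n)(1/2+1/p)} ‖f‖_p`
for non-degenerate curves, witnessing the Fourier decay constraint. -/
theorem statement6
    (n : ℕ) (hn : 2 ≤ n)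
    (p : ℝ≥0∞) (hp : 2 ≤ p)
    (a b : ℝ) (hab : a < b)
    (γ : ℝ → Euc n) (hγ : ContDiff ℝ (⊤ : ℕ∞) γ)
    (hinj : Set.InjOn γ (Set.Icc a b))
    (hreg : ∀ s ∈ Set.Icc a b, deriv γ s ≠ 0)
    (hnd : NonDeg γ (Set.Icc a b))
    (χ : ℝ → ℝ) (hχ : ContDiff ℝ (⊤ : ℕ∞) χ) (hχc : HasCompactSupport χ)
    (hχs : tsupport χ ⊆ Set.Ioo a b)
    (hχpos : ∀ s, 0 ≤ χ s) (hχne : χ ≠ 0) :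
    ∃ c : ℝ, 0 < c ∧ ∀ lam : ℝ, 1 ≤ lam →
      ∃ f : SchwartzMap (Euc n) ℂ, f ≠ 0 ∧
        tsupport (𝓕 ⇑f) ⊆ {ξ : Euc n | lam / 2 ≤ ‖ξ‖ ∧ ‖ξ‖ ≤ 2 * lam} ∧
        ENNReal.ofReal (c * lam ^ (-((1 / (n : ℝ)) * (1 / 2 + (1 / p).toReal)))) *
            eLpNorm (⇑f) p volume ≤
          eLpNorm (avgOp γ χ ⇑f) p volume :=
  statement6_general hn hp (hγ.of_le (by exact_mod_cast le_top)) hinj hreg hχ.continuous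
    ((subset_tsupport χ).trans (hχs.trans Ioo_subset_Icc_self)) hχpos hχne
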